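/- arXiv:2010.08922 — 2 statements merged into one kernel-verified Lean document; each statement's English description precedes it below -/
import Mathlib

section
/- For any fixed 0 < δ < 1/16 the following holds for all integers n sufficiently large with respect to δ. Let λ = n^{(1/2−8δ)n} and suppose R ∈ ℕ satisfies δn ≤ R ≤ 2δn. Then with probability at least 1 − e^{−δ²n} there is a subset B ⊆ {1,…,n} of size n − R such that M_n[{R+1,…,n}, B] is λ-heavy. -/
/-!
The rows `n-1, n-2, …, R` (numbered from `0`) are exposed one at a time. When row `r = n-1-i` is
exposed, its entries in the columns `c ≤ r` are fresh independent signs. After `i` rows, consider the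
energy `∑_B per(last i rows, B)²`, where `B` ranges over a suitable family of `i`-element column sets
(`fam`). It suffices to show that this energy is large after `n - R` rows, since there are at most
`2^n` sets `B`.

*Gain.* The permanents of the last `i + 1` rows form a Euclidean vector that is affine in every
fresh sign. The slope of the sign in column `j` has squared norm equal to the energy of those `B`
that avoid `j`. The columns are divided into windows of width `m + g`, and admissible sets use at
most `m` columns of each window, so the `g` unused columns of the current, fully fresh window give
slopes whose squared norms sum to `g` times the energy. A small-ball inequality (`small_ball`) then
shows that the energy grows by a factor `α`, a small multiple of `g` and hence of order `n`, with
probability at least `1 - ε` (`gain_step`).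

*Floor.* The first `2h` columns are held in reserve and are always fresh. Each time the gain fails,
one more reserved column is allowed in `B`; with at least `h` independent chances to keep its
permanent, almost all of the energy survives up to a factor `2n`, except with probability `2/2^h`
(`floor_step`).

*Potential.* With `d` the number of failed gains, the potential `2^(d-h)`, set to `1` when the
process breaks down, has expectation growing by at most a factor `1 + 2ε` and an additive `2/2^h` per
row (`pot_step`). As it starts from `2^(-h)` with `h` of order `δn`, Markov's inequality bounds the
probability of breakdown (`prob_core`). It remains to choose `ε = δ²/2`, `h ≈ R/4`, `m ≈ R/6`,
`g ≈ m²/n` (`failure_bound`, `heavy_bound`).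
-/

open Finset

/-- The real number (`1` or `-1`) associated to a Boolean: a Rademacher value. -/
noncomputable def rad (b : Bool) : ℝ := if b then 1 else -1

/-- The permanent of the submatrix of `M` with row set `A` and column set `B`,
defined as a sum over all bijections between `A` and `B` (it equals `0` if
`A.card ≠ B.card`). Since the permanent is invariant under row and column
permutations, this faithfully represents `per M[A,B]`. -/
noncomputable def permOn {m n : ℕ} (M : Matrix (Fin m) (Fin n) ℝ)
    (A : Finset (Fin m)) (B : Finset (Fin n)) : ℝ :=
  ∑ σ : {x // x ∈ A} ≃ {y // y ∈ B}, ∏ i : {x // x ∈ A}, M i.1 (σ i).1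

/-- The symmetric `n × n` sign matrix determined by Boolean data `ω` (the entries on and
above the diagonal are `rad (ω i j)` for `i ≤ j`; below-diagonal entries are given by
symmetry). As `ω` ranges uniformly over all Boolean data, this is exactly the random
symmetric matrix `M_n` with i.i.d. Rademacher entries on and above the diagonal. -/
noncomputable def symMat (n : ℕ) (ω : Fin n → Fin n → Bool) : Matrix (Fin n) (Fin n) ℝ :=
  fun i j => if i ≤ j then rad (ω i j) else rad (ω j i)

open Classical in
/-- The probability of the event `P` for the random symmetric Rademacher matrix `M_n`. -/
noncomputable def prob (n : ℕ) (P : Matrix (Fin n) (Fin n) ℝ → Prop) : ℝ :=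
  ((univ.filter fun ω : Fin n → Fin n → Bool => P (symMat n ω)).card : ℝ) / 2 ^ (n * n)

/-! ### Permanents of the last rows -/

lemma permOn_congr {m n : ℕ} {M M' : Matrix (Fin m) (Fin n) ℝ} {A : Finset (Fin m)}
    (h : ∀ a ∈ A, M a = M' a) (B : Finset (Fin n)) : permOn M A B = permOn M' A B := by
  unfold permOn
  refine Finset.sum_congr rfl fun σ _ => Finset.prod_congr rfl fun i _ => ?_
  rw [h i.1 i.2]

lemma permOn_empty {m n : ℕ} (M : Matrix (Fin m) (Fin n) ℝ) : permOn M ∅ ∅ = 1 := by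
  unfold permOn
  simp only [univ_eq_empty, prod_empty, sum_const, card_univ, nsmul_eq_mul, mul_one]
  rw [Nat.cast_eq_one, Fintype.card_eq_one_iff]
  exact ⟨Equiv.equivOfIsEmpty _ _, fun e => Equiv.ext fun a => absurd a.2 (Finset.notMem_empty _)⟩

/-- Laplace expansion of the permanent along the row `r`. -/
lemma permOn_insert {m n : ℕ} (M : Matrix (Fin m) (Fin n) ℝ) {A : Finset (Fin m)}
    {r : Fin m} (hr : r ∉ A) (B : Finset (Fin n)) :
    permOn M (insert r A) B = ∑ b ∈ B, M r b * permOn M A (B.erase b) := by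
  classical
  unfold permOn
  let eI := Finset.subtypeInsertEquivOption hr
  have h1 : ∑ σ : {x // x ∈ insert r A} ≃ {y // y ∈ B},
        ∏ i : {x // x ∈ insert r A}, M i.1 (σ i).1 =
      ∑ τ : Option {x // x ∈ A} ≃ {y // y ∈ B},
        M r (τ none).1 * ∏ i : {x // x ∈ A}, M i.1 (τ (some i)).1 := by
    refine Fintype.sum_equiv (Equiv.equivCongr eI (Equiv.refl _)) _ _ fun σ => ?_
    rw [← Equiv.prod_comp eI.symm, Fintype.prod_option]
    rfl
  rw [h1, ← Finset.sum_coe_sort B]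
  rw [← Finset.sum_fiberwise (s := univ)
    (g := fun τ : Option {x // x ∈ A} ≃ {y // y ∈ B} => τ none)]
  refine Finset.sum_congr rfl fun b _ => ?_
  rw [Finset.mul_sum]
  let eB : {y : {y // y ∈ B} // y ≠ b} ≃ {y // y ∈ B.erase b.1} :=
    { toFun := fun y => ⟨y.1.1, Finset.mem_erase.2 ⟨fun h => y.2 (Subtype.ext h), y.1.2⟩⟩
      invFun := fun y => ⟨⟨y.1, Finset.mem_of_mem_erase y.2⟩,
        fun h => Finset.ne_of_mem_erase y.2 (congrArg Subtype.val h)⟩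
      left_inv := fun y => rfl
      right_inv := fun y => rfl }
  rw [← Finset.sum_subtype_of_mem (p := fun τ : Option {x // x ∈ A} ≃ {y // y ∈ B} => τ none = b)
    (f := fun τ => M r (τ none).1 * ∏ i : {x // x ∈ A}, M i.1 (τ (some i)).1)
    (fun x hx => (Finset.mem_filter.1 hx).2)]
  have hu : (univ.filter fun τ : Option {x // x ∈ A} ≃ {y // y ∈ B} => τ none = b).subtype
      (fun τ => τ none = b) = univ := by
    ext τ; simp [τ.2]
  rw [hu]
  refine Fintype.sum_equiv ((Equiv.optionSubtype b).trans
    (Equiv.equivCongr (Equiv.refl _) eB)) _ _ fun τ => ?_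
  rw [τ.2]
  rfl

/-- The symmetric sign matrix read from the lower triangle: the entry in row `a` and column
`b ≤ a` is `rad (η a b)`. With this indexing, the signs first met when the rows are exposed from
the bottom up, namely those of row `a` in columns `b ≤ a`, are all controlled by `η a`. -/
noncomputable def swMat {n : ℕ} (η : Fin n → Fin n → Bool) : Matrix (Fin n) (Fin n) ℝ :=
  symMat n fun i j => η j i

lemma swMat_of_le {n : ℕ} (η : Fin n → Fin n → Bool) {a b : Fin n} (h : b ≤ a) :
    swMat η a b = rad (η a b) := by
  unfold swMat symMat
  split_ifs with h2
  · rw [le_antisymm h h2]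
  · rfl

lemma swMat_of_lt {n : ℕ} (η : Fin n → Fin n → Bool) {a b : Fin n} (h : a < b) :
    swMat η a b = rad (η b a) := by
  unfold swMat symMat
  rw [if_pos h.le]

lemma swMat_update_of_lt {n : ℕ} (η : Fin n → Fin n → Bool) (r : Fin n) (x : Fin n → Bool)
    {a : Fin n} (h : r < a) : swMat (Function.update η r x) a = swMat η a := by
  funext b
  rcases le_or_gt b a with hb | hb
  · rw [swMat_of_le _ hb, swMat_of_le _ hb, Function.update_of_ne h.ne']
  · rw [swMat_of_lt _ hb, swMat_of_lt _ hb, Function.update_of_ne (h.trans hb).ne.symm]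

/-- The last `i` row indices of `Fin n`. -/
def lastRows (n i : ℕ) : Finset (Fin n) := univ.filter fun a : Fin n => n ≤ a.1 + i

/-- The permanent of the last `i` rows of `swMat η` in the columns `B`. -/
noncomputable def per {n : ℕ} (η : Fin n → Fin n → Bool) (i : ℕ) (B : Finset (Fin n)) : ℝ :=
  permOn (swMat η) (lastRows n i) B

lemma per_zero {n : ℕ} (η : Fin n → Fin n → Bool) : per η 0 ∅ = 1 := by
  have : lastRows n 0 = ∅ := by
    ext a; simp [lastRows, a.2]
  rw [per, this, permOn_empty]

/-- The last `i` rows do not involve the signs of the next row `r = n - 1 - i`. -/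
lemma per_update {n : ℕ} (η : Fin n → Fin n → Bool) {i : ℕ} {r : Fin n} (hr : r.1 + 1 + i = n)
    (x : Fin n → Bool) (B : Finset (Fin n)) :
    per (Function.update η r x) i B = per η i B := by
  refine permOn_congr (fun a ha => swMat_update_of_lt η r x ?_) B
  simp only [lastRows, mem_filter] at ha
  rw [Fin.lt_def]; omega

/-- Expansion along the new row `r = n - 1 - i`, whose signs in the columns `b ≤ r` are the
fresh signs `x`, the remaining ones having been exposed before. -/
lemma per_succ {n : ℕ} (η : Fin n → Fin n → Bool) {i : ℕ} {r : Fin n} (hr : r.1 + 1 + i = n)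
    (x : Fin n → Bool) (B : Finset (Fin n)) :
    per (Function.update η r x) (i + 1) B =
      ∑ b ∈ B, (if b ≤ r then rad (x b) else rad (η b r)) * per η i (B.erase b) := by
  have h1 : lastRows n (i + 1) = insert r (lastRows n i) := by
    ext a
    simp only [lastRows, mem_filter, mem_insert, mem_univ, true_and, Fin.ext_iff]
    omega
  have h2 : r ∉ lastRows n i := by
    simp only [lastRows, mem_filter, mem_univ, true_and]; omega
  rw [per, h1, permOn_insert _ h2]
  refine Finset.sum_congr rfl fun b _ => ?_
  rw [← per_update η hr x]
  congr 1
  split_ifs with hb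
  · rw [swMat_of_le _ hb, Function.update_self]
  · rw [swMat_of_lt _ (not_le.1 hb), Function.update_of_ne (not_le.1 hb).ne.symm]

/-- The permanent of the last `i + 1` rows is affine in each fresh sign `x j`, with slope the
permanent of the last `i` rows with column `j` removed. -/
lemma per_slope {n : ℕ} (η : Fin n → Fin n → Bool) {i : ℕ} {r : Fin n} (hr : r.1 + 1 + i = n)
    (x : Fin n → Bool) (B : Finset (Fin n)) {j : Fin n} (hj : j ≤ r) :
    per (Function.update η r (Function.update x j true)) (i + 1) B -
      per (Function.update η r (Function.update x j false)) (i + 1) B =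
      2 * (if j ∈ B then per η i (B.erase j) else 0) := by
  rw [per_succ η hr, per_succ η hr, ← Finset.sum_sub_distrib]
  have : ∀ b ∈ B, (if b ≤ r then rad (Function.update x j true b) else rad (η b r)) *
        per η i (B.erase b) -
      (if b ≤ r then rad (Function.update x j false b) else rad (η b r)) *
        per η i (B.erase b) = if b = j then 2 * per η i (B.erase b) else 0 := by
    intro b _
    by_cases hb : b = j
    · subst hb
      simp only [hj, if_true, Function.update_self, rad]
      norm_num
      ring
    · simp [hb, Function.update_of_ne]
  rw [Finset.sum_congr rfl this, Finset.sum_ite_eq' B j]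
  split_ifs <;> simp

lemma per_update_notMem {n : ℕ} (η : Fin n → Fin n → Bool) {i : ℕ} {r : Fin n}
    (hr : r.1 + 1 + i = n) (x : Fin n → Bool) (B : Finset (Fin n)) {k : Fin n} (hk : k ∉ B)
    (b : Bool) :
    per (Function.update η r (Function.update x k b)) (i + 1) B =
      per (Function.update η r x) (i + 1) B := by
  rw [per_succ η hr, per_succ η hr]
  refine Finset.sum_congr rfl fun c hc => ?_
  have hck : c ≠ k := fun h => hk (h ▸ hc)
  rw [Function.update_of_ne hck]

/-! ### Small-ball estimates for sums of random signs -/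

/-- Resampling one coordinate of a uniformly random function preserves averages. -/
lemma sum_update_avg {ι X : Type*} [Fintype ι] [DecidableEq ι] [Fintype X]
    (f : (ι → X) → ℝ) (r : ι) :
    ∑ x : ι → X, ∑ v : X, f (Function.update x r v) = Fintype.card X * ∑ x, f x := by
  classical
  let φ : (ι → X) × X → (ι → X) × X := fun p => (Function.update p.1 r p.2, p.1 r)
  have hφ : Function.Involutive φ := by
    rintro ⟨x, v⟩
    simp [φ]
  rw [← Fintype.sum_prod_type' (f := fun x v => f (Function.update x r v))]
  have h := Equiv.sum_comp hφ.toPerm (fun p : (ι → X) × X => f p.1)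
  have h2 : ∑ p : (ι → X) × X, f p.1 = Fintype.card X * ∑ x, f x := by
    rw [Fintype.sum_prod_type]
    simp [Finset.mul_sum]
  rw [← h2, ← h]
  rfl

/-- Averaging `exp (-σ‖A ± y‖²)` over the sign costs a factor `exp (-σ‖y‖²)` and shrinks the
parameter `σ` slightly; this is `cosh t ≤ exp (t²/2)` combined with Cauchy–Schwarz. -/
lemma exp_pair_le {E : Type*} [NormedAddCommGroup E] [InnerProductSpace ℝ E]
    (A y : E) (σ : ℝ) :
    Real.exp (-σ * ‖A + y‖ ^ 2) + Real.exp (-σ * ‖A - y‖ ^ 2) ≤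
      2 * (Real.exp (-(σ * ‖y‖ ^ 2)) *
        Real.exp (-(σ * (1 - 2 * (σ * ‖y‖ ^ 2))) * ‖A‖ ^ 2)) := by
  have h1 := norm_add_sq_real A y
  have h2 := norm_sub_sq_real A y
  have hc := Real.cosh_le_exp_half_sq (2 * σ * inner ℝ A y)
  have hcs : (inner ℝ A y) ^ 2 ≤ ‖A‖ ^ 2 * ‖y‖ ^ 2 := by
    rw [← mul_pow]
    exact sq_le_sq' (neg_le_of_abs_le (abs_real_inner_le_norm A y))
      (le_of_abs_le (abs_real_inner_le_norm A y))
  have e1 : Real.exp (-σ * ‖A + y‖ ^ 2) + Real.exp (-σ * ‖A - y‖ ^ 2) =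
      2 * (Real.exp (-σ * (‖A‖ ^ 2 + ‖y‖ ^ 2)) * Real.cosh (2 * σ * inner ℝ A y)) := by
    rw [Real.cosh_eq, h1, h2]
    have a1 : -σ * (‖A‖ ^ 2 + 2 * inner ℝ A y + ‖y‖ ^ 2) =
      -σ * (‖A‖ ^ 2 + ‖y‖ ^ 2) + -(2 * σ * inner ℝ A y) := by ring
    have a2 : -σ * (‖A‖ ^ 2 - 2 * inner ℝ A y + ‖y‖ ^ 2) =
      -σ * (‖A‖ ^ 2 + ‖y‖ ^ 2) + (2 * σ * inner ℝ A y) := by ring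
    rw [a1, a2, Real.exp_add, Real.exp_add]
    ring
  rw [e1]
  refine mul_le_mul_of_nonneg_left ?_ (by norm_num)
  refine (mul_le_mul_of_nonneg_left hc (Real.exp_pos _).le).trans ?_
  rw [← Real.exp_add, ← Real.exp_add, Real.exp_le_exp]
  nlinarith [mul_le_mul_of_nonneg_left hcs (sq_nonneg σ)]

/-- Laplace transform bound for a Hilbert-space valued function `V` of random signs that is
affine in each sign `x j`, `j ∈ s`, with slope `y j`:
`𝔼 exp (-σ‖V‖²) ≤ (1 + 2σ ∑ ‖y j‖²)^(-1/4)` as long as `σ‖y j‖² ≤ 1/4`. The signs are averaged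
out one at a time, the decrease of `σ` along the way being absorbed by the exponent `1/4`. -/
lemma small_ball_exp {ι E : Type*} [Fintype ι] [DecidableEq ι] [NormedAddCommGroup E]
    [InnerProductSpace ℝ E] (y : ι → E) (s : Finset ι) :
    ∀ (V : (ι → Bool) → E) (σ : ℝ), 0 ≤ σ → (∀ j ∈ s, σ * ‖y j‖ ^ 2 ≤ 1 / 4) →
      (∀ j ∈ s, ∀ x, V (Function.update x j true) - V (Function.update x j false)
        = (2 : ℝ) • y j) →
      ∑ x, Real.exp (-σ * ‖V x‖ ^ 2) ≤
        2 ^ Fintype.card ι * (1 + 2 * σ * ∑ j ∈ s, ‖y j‖ ^ 2) ^ (-(1 / 4 : ℝ)) := by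
  induction s using Finset.induction_on with
  | empty =>
    intro V σ hσ _ _
    have : ∑ x : ι → Bool, Real.exp (-σ * ‖V x‖ ^ 2) ≤ ∑ x : ι → Bool, (1 : ℝ) := by
      refine Finset.sum_le_sum fun x _ => ?_
      rw [Real.exp_le_one_iff]
      nlinarith [mul_nonneg hσ (sq_nonneg ‖V x‖)]
    simpa using this
  | insert j s hj ih =>
    intro V σ hσ hy hV
    set u := σ * ‖y j‖ ^ 2 with hu
    have hu0 : 0 ≤ u := by positivity
    have hu4 : u ≤ 1 / 4 := hy j (by simp)
    set A : (ι → Bool) → E := fun x =>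
      (2⁻¹ : ℝ) • (V (Function.update x j true) + V (Function.update x j false)) with hA
    have hVt : ∀ x, V (Function.update x j true) = A x + y j := by
      intro x
      have := hV j (by simp) x
      have h2 : y j = (2⁻¹ : ℝ) •
        (V (Function.update x j true) - V (Function.update x j false)) := by
        rw [this, smul_smul]; norm_num
      rw [h2, hA]
      module
    have hVf : ∀ x, V (Function.update x j false) = A x - y j := by
      intro x
      have := hV j (by simp) x
      have h2 : y j = (2⁻¹ : ℝ) •
        (V (Function.update x j true) - V (Function.update x j false)) := by
        rw [this, smul_smul]; norm_num
      rw [h2, hA]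
      module
    set σ' := σ * (1 - 2 * u) with hσ'
    have hσ'0 : 0 ≤ σ' := mul_nonneg hσ (by linarith)
    have hσ'le : σ' ≤ σ := by nlinarith
    have key := ih A σ' hσ'0
      (fun k hk => (mul_le_mul_of_nonneg_right hσ'le (sq_nonneg _)).trans
        (hy k (by simp [hk])))
      (by
        intro k hk x
        have hkj : k ≠ j := fun h => hj (h ▸ hk)
        have h1 := hV k (by simp [hk]) (Function.update x j true)
        have h2 := hV k (by simp [hk]) (Function.update x j false)
        simp only [hA, Function.update_comm hkj]
        rw [← smul_sub, add_sub_add_comm, h1, h2]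
        module)
    have havg := sum_update_avg (fun x : ι → Bool => Real.exp (-σ * ‖V x‖ ^ 2)) j
    simp only [Fintype.sum_bool, Fintype.card_bool, hVt, hVf] at havg
    have hle : ∑ x, (Real.exp (-σ * ‖A x + y j‖ ^ 2) + Real.exp (-σ * ‖A x - y j‖ ^ 2)) ≤
        ∑ x, 2 * (Real.exp (-u) * Real.exp (-σ' * ‖A x‖ ^ 2)) :=
      Finset.sum_le_sum fun x _ => exp_pair_le (A x) (y j) σ
    rw [havg, ← Finset.mul_sum, ← Finset.mul_sum] at hle
    have hle2 : ∑ x, Real.exp (-σ * ‖V x‖ ^ 2) ≤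
        Real.exp (-u) * ∑ x, Real.exp (-σ' * ‖A x‖ ^ 2) := by
      push_cast at hle; linarith
    refine hle2.trans ((mul_le_mul_of_nonneg_left key (Real.exp_pos _).le).trans ?_)
    rw [Finset.sum_insert hj]
    set T := ∑ k ∈ s, ‖y k‖ ^ 2 with hT
    have hT0 : 0 ≤ T := Finset.sum_nonneg fun _ _ => sq_nonneg _
    rw [mul_left_comm]
    refine mul_le_mul_of_nonneg_left ?_ (by positivity)
    have he : Real.exp (-u) = (Real.exp (4 * u)) ^ (-(1 / 4 : ℝ)) := by
      rw [← Real.exp_mul]; congr 1; ring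
    rw [he, ← Real.mul_rpow (Real.exp_pos _).le (by positivity)]
    refine Real.rpow_le_rpow_of_nonpos (by positivity) ?_ (by norm_num)
    have h4 : 1 + 4 * u ≤ Real.exp (4 * u) := by
      linarith [Real.add_one_le_exp (4 * u)]
    have hsT : 0 ≤ σ * T := mul_nonneg hσ hT0
    have : 1 + 2 * σ * (‖y j‖ ^ 2 + T) = 1 + 2 * u + 2 * (σ * T) := by rw [hu]; ring
    rw [this]
    have h5 : 1 + 2 * σ' * T = 1 + 2 * ((1 - 2 * u) * (σ * T)) := by rw [hσ']; ring
    rw [h5]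
    have h6 : 0 ≤ 1 + 2 * ((1 - 2 * u) * (σ * T)) := by
      have := mul_nonneg (show 0 ≤ 1 - 2 * u by linarith) hsT
      linarith
    refine le_trans ?_ (mul_le_mul_of_nonneg_right h4 h6)
    nlinarith [mul_nonneg (mul_nonneg hu0 (show 0 ≤ 1 - 4 * u by linarith)) hsT]

/-- Small-ball inequality: if each `‖y j‖²` is at most `S` while they sum to at least `g S`, then
`‖V‖² < α S` has probability at most `e (1 + 2g/α)^(-1/4)`. It is Markov's inequality applied to
`small_ball_exp` at `σ = 1/(αS)`. -/
lemma small_ball {ι E : Type*} [Fintype ι] [DecidableEq ι] [NormedAddCommGroup E]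
    [InnerProductSpace ℝ E] (y : ι → E) (s : Finset ι) (V : (ι → Bool) → E)
    (hV : ∀ j ∈ s, ∀ x, V (Function.update x j true) - V (Function.update x j false)
        = (2 : ℝ) • y j)
    (S g α : ℝ) (hS : 0 < S) (hg : 0 ≤ g) (hα : 4 ≤ α) (hy : ∀ j ∈ s, ‖y j‖ ^ 2 ≤ S)
    (hT : g * S ≤ ∑ j ∈ s, ‖y j‖ ^ 2) [DecidablePred fun x => ‖V x‖ ^ 2 < α * S] :
    ((univ.filter fun x => ‖V x‖ ^ 2 < α * S).card : ℝ) ≤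
      2 ^ Fintype.card ι * (Real.exp 1 * (1 + 2 * g / α) ^ (-(1 / 4 : ℝ))) := by
  have hα0 : 0 < α := by linarith
  have h := small_ball_exp y s V (1 / (α * S)) (by positivity) (fun j hj => by
    have := hy j hj
    rw [one_div_mul_eq_div, div_le_iff₀ (by positivity)]
    nlinarith) hV
  have h1 : ((univ.filter fun x => ‖V x‖ ^ 2 < α * S).card : ℝ) * Real.exp (-1) ≤
      ∑ x, Real.exp (-(1 / (α * S)) * ‖V x‖ ^ 2) := by
    rw [← nsmul_eq_mul]
    refine le_trans (Finset.card_nsmul_le_sum _ _ _ ?_)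
      (Finset.sum_le_sum_of_subset_of_nonneg (Finset.subset_univ _)
        fun _ _ _ => (Real.exp_pos _).le)
    intro x hx
    rw [Finset.mem_filter] at hx
    rw [Real.exp_le_exp, neg_mul, neg_le_neg_iff, one_div_mul_eq_div,
      div_le_one (by positivity)]
    exact hx.2.le
  have h2 : (1 + 2 * (1 / (α * S)) * ∑ j ∈ s, ‖y j‖ ^ 2) ^ (-(1 / 4 : ℝ)) ≤
      (1 + 2 * g / α) ^ (-(1 / 4 : ℝ)) := by
    refine Real.rpow_le_rpow_of_nonpos (by positivity) ?_ (by norm_num)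
    have : 2 * g / α = 2 * (1 / (α * S)) * (g * S) := by field_simp
    rw [this]
    gcongr
  have h3 := h1.trans (h.trans (mul_le_mul_of_nonneg_left h2 (by positivity)))
  rw [Real.exp_neg, ← div_eq_mul_inv, div_le_iff₀ (Real.exp_pos _)] at h3
  linarith

/-- If `φ j` is affine with slope `p` in the sign `x j` and does not depend on the other signs of
`s`, then the events `|φ j| < |p|`, `j ∈ s`, hold simultaneously with probability at most
`2^(-|s|)`: for each `j` at most one of the two values of `x j` makes `|φ j| < |p|`. -/
lemma all_small_count {ι : Type*} [Fintype ι] [DecidableEq ι] (φ : ι → (ι → Bool) → ℝ)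
    (p : ℝ) (s : Finset ι)
    (hφ : ∀ j ∈ s, ∀ x, φ j (Function.update x j true) - φ j (Function.update x j false)
      = 2 * p)
    (hinv : ∀ j ∈ s, ∀ k ∈ s, k ≠ j → ∀ x b, φ j (Function.update x k b) = φ j x) :
    2 ^ s.card * ∑ x, (if ∀ j ∈ s, |φ j x| < |p| then (1 : ℝ) else 0) ≤
      2 ^ Fintype.card ι := by
  induction s using Finset.induction_on with
  | empty => simp
  | insert j s hj ih =>
    have ih' := ih (fun k hk => hφ k (by simp [hk]))
      (fun k hk l hl => hinv k (by simp [hk]) l (by simp [hl]))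
    refine le_trans ?_ ih'
    rw [Finset.card_insert_of_notMem hj, pow_succ, mul_assoc]
    refine mul_le_mul_of_nonneg_left ?_ (by positivity)
    have havg := sum_update_avg (fun x : ι → Bool =>
      (if ∀ k ∈ insert j s, |φ k x| < |p| then (1 : ℝ) else 0)) j
    rw [Fintype.card_bool] at havg
    push_cast at havg
    rw [← havg]
    refine Finset.sum_le_sum fun x _ => ?_
    have hs : ∀ b, (∀ k ∈ insert j s, |φ k (Function.update x j b)| < |p|) ↔
        |φ j (Function.update x j b)| < |p| ∧ ∀ k ∈ s, |φ k x| < |p| := by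
      intro b
      rw [Finset.forall_mem_insert]
      refine and_congr_right fun _ => forall₂_congr fun k hk => ?_
      rw [hinv k (by simp [hk]) j (by simp) (fun h => hj (h ▸ hk))]
    rw [Fintype.sum_bool]
    simp only [hs]
    by_cases hall : ∀ k ∈ s, |φ k x| < |p|
    · have hne : ¬ (|φ j (Function.update x j true)| < |p| ∧
          |φ j (Function.update x j false)| < |p|) := by
        rintro ⟨h1, h2⟩
        have h3 := hφ j (by simp) x
        have h4 := abs_sub (φ j (Function.update x j true)) (φ j (Function.update x j false))
        rw [h3, abs_mul, abs_two] at h4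
        linarith
      rw [if_pos hall]
      by_cases h1 : |φ j (Function.update x j true)| < |p|
      · have h2 : ¬ |φ j (Function.update x j false)| < |p| := fun h => hne ⟨h1, h⟩
        rw [if_pos ⟨h1, hall⟩, if_neg (fun h => h2 h.1)]; norm_num
      · rw [if_neg (fun h => h1 h.1)]
        split_ifs <;> norm_num
    · simp [hall]

/-! ### Windows and admissible column sets -/

/-- The `q`-th window of columns, namely `n - m - (q+1)(m+g) ≤ c < n - m - q(m+g)` with the
reserved columns `c < 2h` removed. The bounds are written additively to avoid truncated
subtraction. Window `q` serves the steps `qm ≤ i < (q+1)m`, during which all its columns are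
still fresh. -/
def win (n h m g q : ℕ) : Finset (Fin n) :=
  univ.filter fun c : Fin n => 2 * h ≤ c.1 ∧ m + q * (m + g) + c.1 + 1 ≤ n ∧
    n ≤ c.1 + m + (q + 1) * (m + g)

/-- The reserved columns: the first `2h`, which remain fresh throughout. -/
def res (n h : ℕ) : Finset (Fin n) := univ.filter fun c : Fin n => c.1 < 2 * h

open Classical in
/-- The admissible column sets after `i` rows: sets of `i` columns that use at most `d` reserved
columns and at most `min m (i - qm)` columns of window `q` for every `q`. The truncated subtraction
is intended: before step `qm`, window `q` must be untouched. -/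
noncomputable def fam (n h m g i d : ℕ) : Finset (Finset (Fin n)) :=
  univ.filter fun B => B.card = i ∧ (B ∩ res n h).card ≤ d ∧
    ∀ q, (B ∩ win n h m g q).card ≤ min m (i - q * m)

lemma mem_fam {n h m g i d : ℕ} {B : Finset (Fin n)} : B ∈ fam n h m g i d ↔
    B.card = i ∧ (B ∩ res n h).card ≤ d ∧
      ∀ q, (B ∩ win n h m g q).card ≤ min m (i - q * m) := by
  simp [fam]

lemma win_card {n h m g q : ℕ} (hq : m + (q + 1) * (m + g) + 2 * h ≤ n) :
    (win n h m g q).card = m + g := by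
  have h1 : (win n h m g q).map Fin.valEmbedding =
      Finset.Ico (n - (m + (q + 1) * (m + g))) (n - (m + q * (m + g))) := by
    ext a
    simp only [win, mem_map, mem_filter, mem_univ, true_and, Fin.valEmbedding_apply, mem_Ico]
    constructor
    · rintro ⟨c, hc, rfl⟩
      omega
    · intro ha
      exact ⟨⟨a, by omega⟩, by simp only; omega, rfl⟩
  rw [← Finset.card_map Fin.valEmbedding, h1, Nat.card_Ico]
  have : (q + 1) * (m + g) = q * (m + g) + (m + g) := by ring
  omega

lemma res_card {n h : ℕ} (hh : 2 * h ≤ n) : (res n h).card = 2 * h := by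
  have h1 : (res n h).map Fin.valEmbedding = Finset.range (2 * h) := by
    ext a
    simp only [res, mem_map, mem_filter, mem_univ, true_and, Fin.valEmbedding_apply, mem_range]
    constructor
    · rintro ⟨c, hc, rfl⟩
      omega
    · intro ha
      exact ⟨⟨a, by omega⟩, ha, rfl⟩
  rw [← Finset.card_map Fin.valEmbedding, h1, Finset.card_range]

lemma win_notMem_res {n h m g q : ℕ} {j : Fin n} (hj : j ∈ win n h m g q) : j ∉ res n h := by
  simp only [win, res, mem_filter, mem_univ, true_and] at *
  omega

lemma win_unique {n h m g q q' : ℕ} {j : Fin n} (hj : j ∈ win n h m g q)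
    (hj' : j ∈ win n h m g q') : q = q' := by
  simp only [win, mem_filter, mem_univ, true_and] at hj hj'
  have key : ∀ a b : ℕ, a < b → (a + 1) * (m + g) ≤ b * (m + g) :=
    fun a b hab => Nat.mul_le_mul_right _ hab
  rcases lt_trichotomy q q' with h1 | h1 | h1
  · have := key _ _ h1; omega
  · exact h1
  · have := key _ _ h1; omega

/-- At step `i` all columns of window `i / m` are fresh for the new row `r = n - 1 - i`. -/
lemma win_fresh {n h m g i : ℕ} (hm : 0 < m) {r j : Fin n} (hr : r.1 + 1 + i = n)
    (hj : j ∈ win n h m g (i / m)) : j ≤ r := by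
  simp only [win, mem_filter, mem_univ, true_and] at hj
  have h1 : (i / m) * m + m > i := by
    have := Nat.lt_div_mul_add (a := i) hm
    omega
  have h2 : (i / m) * (m + g) = (i / m) * m + (i / m) * g := by ring
  have h3 : 0 ≤ (i / m) * g := Nat.zero_le _
  rw [Fin.le_def]
  omega

lemma div_bounds {i m : ℕ} (hm : 0 < m) : (i / m) * m ≤ i ∧ i < (i / m) * m + m :=
  ⟨Nat.div_mul_le_self i m, by have := Nat.lt_div_mul_add (a := i) hm; omega⟩

lemma fam_insert_win {n h m g i d : ℕ} (hm : 0 < m) {B : Finset (Fin n)} {j : Fin n}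
    (hB : B ∈ fam n h m g i d) (hj : j ∈ win n h m g (i / m)) (hjB : j ∉ B) :
    insert j B ∈ fam n h m g (i + 1) d := by
  rw [mem_fam] at hB ⊢
  refine ⟨by rw [card_insert_of_notMem hjB, hB.1], ?_, fun q => ?_⟩
  · rw [insert_inter_of_notMem (win_notMem_res hj)]
    exact hB.2.1
  · have h1 := hB.2.2 q
    by_cases hq : q = i / m
    · subst hq
      rw [insert_inter_of_mem hj, card_insert_of_notMem (fun h => hjB (mem_inter.1 h).1)]
      have := div_bounds (i := i) hm
      omega
    · rw [insert_inter_of_notMem (fun h => hq (win_unique h hj))]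
      omega

lemma fam_insert_res {n h m g i d : ℕ} {B : Finset (Fin n)} {j : Fin n}
    (hB : B ∈ fam n h m g i d) (hj : j ∈ res n h) (hjB : j ∉ B) :
    insert j B ∈ fam n h m g (i + 1) (d + 1) := by
  rw [mem_fam] at hB ⊢
  refine ⟨by rw [card_insert_of_notMem hjB, hB.1], ?_, fun q => ?_⟩
  · rw [insert_inter_of_mem hj, card_insert_of_notMem (fun h => hjB (mem_inter.1 h).1)]
    omega
  · have h1 := hB.2.2 q
    rw [insert_inter_of_notMem (fun h => win_notMem_res h hj)]
    omega

lemma fam_erase_win {n h m g i d : ℕ} (hm : 0 < m) {B : Finset (Fin n)} {j : Fin n}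
    (hB : B ∈ fam n h m g (i + 1) d) (hj : j ∈ win n h m g (i / m)) (hjB : j ∈ B) :
    B.erase j ∈ fam n h m g i d := by
  rw [mem_fam] at hB ⊢
  refine ⟨by rw [card_erase_of_mem hjB, hB.1]; rfl, ?_, fun q => ?_⟩
  · exact (card_le_card (inter_subset_inter_right (erase_subset _ _))).trans hB.2.1
  · have h1 := hB.2.2 q
    have hb := div_bounds (i := i) hm
    rcases lt_trichotomy q (i / m) with hq | hq | hq
    · have h2 := card_le_card
        (inter_subset_inter_right (u := win n h m g q) (erase_subset j B))
      have : (q + 1) * m ≤ (i / m) * m := Nat.mul_le_mul_right _ hq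
      have h3 : (q + 1) * m = q * m + m := by ring
      omega
    · subst hq
      rw [erase_inter, card_erase_of_mem (mem_inter.2 ⟨hjB, hj⟩)]
      omega
    · have h2 := card_le_card
        (inter_subset_inter_right (u := win n h m g q) (erase_subset j B))
      have : (i / m + 1) * m ≤ q * m := Nat.mul_le_mul_right _ hq
      have h3 : (i / m + 1) * m = (i / m) * m + m := by ring
      omega

/-! ### One step of the process -/

/-- The sum of the squared permanents of the last `i` rows over all admissible column sets. -/
noncomputable def energy {n : ℕ} (h m g : ℕ) (η : Fin n → Fin n → Bool) (i d : ℕ) : ℝ :=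
  ∑ B ∈ fam n h m g i d, per η i B ^ 2

lemma energy_nonneg {n : ℕ} (h m g : ℕ) (η : Fin n → Fin n → Bool) (i d : ℕ) :
    0 ≤ energy h m g η i d := Finset.sum_nonneg fun _ _ => sq_nonneg _

/-- The squared norm of the slope vector of the fresh sign in column `j` is the part of the energy
carried by the column sets avoiding `j`; adding or removing `j` matches the two families. -/
lemma column_energy {n h m g i d : ℕ} (hm : 0 < m) (η : Fin n → Fin n → Bool) {j : Fin n}
    (hj : j ∈ win n h m g (i / m)) :
    ∑ B ∈ fam n h m g (i + 1) d, (if j ∈ B then per η i (B.erase j) else 0) ^ 2 =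
      ∑ B ∈ fam n h m g i d, if j ∉ B then per η i B ^ 2 else 0 := by
  have h1 : ∀ B : Finset (Fin n), (if j ∈ B then per η i (B.erase j) else 0) ^ 2 =
      if j ∈ B then per η i (B.erase j) ^ 2 else 0 := by
    intro B; split_ifs <;> simp
  simp only [h1]
  rw [← Finset.sum_filter, ← Finset.sum_filter]
  refine Finset.sum_nbij' (fun B => B.erase j) (fun B => insert j B) ?_ ?_ ?_ ?_ ?_
  · intro B hB
    rw [mem_filter] at hB ⊢
    exact ⟨fam_erase_win hm hB.1 hj hB.2, notMem_erase _ _⟩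
  · intro B hB
    rw [mem_filter] at hB ⊢
    exact ⟨fam_insert_win hm hB.1 hj hB.2, mem_insert_self _ _⟩
  · intro B hB
    exact insert_erase (mem_filter.1 hB).2
  · intro B hB
    exact erase_insert (mem_filter.1 hB).2
  · intro B _
    rfl

open Classical in
/-- With high probability a new row multiplies the energy by `α` without using a new reserved
column. Each admissible `B` misses at least `g` of the `m + g` columns of the current window, so
the slope vectors of the window have total energy at least `g` times the old energy. -/
lemma gain_step {n h m g i d : ℕ} (hm : 0 < m) (η : Fin n → Fin n → Bool) {r : Fin n}
    (hr : r.1 + 1 + i = n) (hw : m + (i / m + 1) * (m + g) + 2 * h ≤ n)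
    (hpos : 0 < energy h m g η i d) {α : ℝ} (hα : 4 ≤ α) :
    ((univ.filter fun x => energy h m g (Function.update η r x) (i + 1) d <
        α * energy h m g η i d).card : ℝ) ≤
      2 ^ n * (Real.exp 1 * (1 + 2 * (g : ℝ) / α) ^ (-(1 / 4 : ℝ))) := by
  set S := energy h m g η i d with hS
  let V : (Fin n → Bool) → EuclideanSpace ℝ {B // B ∈ fam n h m g (i + 1) d} := fun x =>
    WithLp.toLp 2 fun B => per (Function.update η r x) (i + 1) B.1
  let y : Fin n → EuclideanSpace ℝ {B // B ∈ fam n h m g (i + 1) d} := fun j =>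
    WithLp.toLp 2 fun B => if j ∈ B.1 then per η i (B.1.erase j) else 0
  have hVn : ∀ x, ‖V x‖ ^ 2 = energy h m g (Function.update η r x) (i + 1) d := by
    intro x
    rw [EuclideanSpace.real_norm_sq_eq, energy]
    exact Finset.sum_coe_sort (fam n h m g (i + 1) d)
      (fun B => per (Function.update η r x) (i + 1) B ^ 2)
  have hyn : ∀ j ∈ win n h m g (i / m),
      ‖y j‖ ^ 2 = ∑ B ∈ fam n h m g i d, if j ∉ B then per η i B ^ 2 else 0 := by
    intro j hj
    rw [EuclideanSpace.real_norm_sq_eq, ← column_energy hm η hj]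
    exact Finset.sum_coe_sort (fam n h m g (i + 1) d)
      (fun B => (if j ∈ B then per η i (B.erase j) else 0) ^ 2)
  have key := small_ball y (win n h m g (i / m)) V
    (fun j hj x => by
      ext B
      simpa [V, y] using per_slope η hr x B.1 (win_fresh hm hr hj))
    S g α hpos (by positivity) hα
    (fun j hj => by
      rw [hyn j hj]
      refine Finset.sum_le_sum fun B _ => ?_
      split_ifs
      · exact sq_nonneg _
      · exact le_rfl)
    (by
      rw [Finset.sum_congr rfl hyn, Finset.sum_comm, hS, energy, Finset.mul_sum]
      refine Finset.sum_le_sum fun B hB => ?_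
      rw [← Finset.sum_filter, Finset.sum_const, nsmul_eq_mul]
      refine mul_le_mul_of_nonneg_right ?_ (sq_nonneg _)
      norm_cast
      have h1 : (win n h m g (i / m)).filter (fun j => j ∉ B) = win n h m g (i / m) \ B := by
        ext; simp
      have h2 := win_card hw
      have h3 := card_sdiff_add_card_inter (win n h m g (i / m)) B
      have h4 := (mem_fam.1 hB).2.2 (i / m)
      rw [inter_comm] at h4
      rw [h1]
      omega)
  simp only [hVn, Fintype.card_fin] at key
  exact key

open Classical in
/-- Except with probability `2/2^h` the energy falls by a factor of at most `2n` when one more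
reserved column may be used. Each admissible `B` misses at least `h` reserved columns `j`, and
it is bad (the permanents of all `B ∪ {j}` are smaller in absolute value than that of `B`) with
probability at most `2^(-h)`; Markov's inequality then bounds the energy of the bad `B`. -/
lemma floor_step {n h m g i d : ℕ} (η : Fin n → Fin n → Bool) {r : Fin n}
    (hr : r.1 + 1 + i = n) (hrh : 2 * h ≤ r.1) (hd : d ≤ h)
    (hpos : 0 < energy h m g η i d) :
    ((univ.filter fun x => energy h m g (Function.update η r x) (i + 1) (d + 1) <
        energy h m g η i d / (2 * n)).card : ℝ) ≤ 2 ^ n * (2 / 2 ^ h) := by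
  set S := energy h m g η i d with hS
  have hn : (0 : ℝ) < n := by
    have : 0 < n := by omega
    exact_mod_cast this
  let q : (Fin n → Bool) → Finset (Fin n) → ℝ := fun x B => per (Function.update η r x) (i + 1) B
  let bad : Finset (Fin n) → (Fin n → Bool) → Prop := fun B x =>
    ∀ j ∈ res n h \ B, |q x (insert j B)| < |per η i B|
  have hcount : ∀ B ∈ fam n h m g i d, ∑ x, (if bad B x then (1 : ℝ) else 0) ≤ 2 ^ n / 2 ^ h := by
    intro B hB
    have hfresh : ∀ j ∈ res n h \ B, j ≤ r := by
      intro j hj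
      have := (mem_sdiff.1 hj).1
      simp only [res, mem_filter, mem_univ, true_and] at this
      rw [Fin.le_def]; omega
    have h1 := all_small_count (fun j x => q x (insert j B)) (per η i B) (res n h \ B)
      (fun j hj x => by
        have := per_slope η hr x (insert j B) (hfresh j hj)
        rw [if_pos (mem_insert_self _ _), erase_insert (mem_sdiff.1 hj).2] at this
        exact this)
      (fun j hj k hk hkj x b => by
        refine per_update_notMem η hr x _ ?_ b
        rw [mem_insert, not_or]
        exact ⟨hkj, (mem_sdiff.1 hk).2⟩)
    rw [Fintype.card_fin] at h1
    have hc : h ≤ (res n h \ B).card := by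
      have h2 := res_card (n := n) (h := h) (by omega)
      have h3 := card_sdiff_add_card_inter (res n h) B
      have h4 := (mem_fam.1 hB).2.1
      rw [inter_comm] at h4
      omega
    rw [le_div_iff₀ (by positivity), mul_comm]
    refine le_trans (mul_le_mul_of_nonneg_right
      (pow_le_pow_right₀ (by norm_num) hc) (Finset.sum_nonneg fun _ _ => ?_)) ?_
    · split_ifs <;> norm_num
    · refine le_trans (le_of_eq ?_) h1
      congr 1
      refine Finset.sum_congr rfl fun x _ => ?_
      congr
  have htotal : ∑ x, ∑ B ∈ fam n h m g i d, (if bad B x then per η i B ^ 2 else 0) ≤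
      2 ^ n / 2 ^ h * S := by
    rw [Finset.sum_comm, hS, energy, Finset.mul_sum]
    refine Finset.sum_le_sum fun B hB => ?_
    have : ∀ x, (if bad B x then per η i B ^ 2 else 0) =
        (if bad B x then (1 : ℝ) else 0) * per η i B ^ 2 := by
      intro x; split_ifs <;> simp
    simp only [this]
    rw [← Finset.sum_mul]
    exact mul_le_mul_of_nonneg_right (hcount B hB) (sq_nonneg _)
  have hgood : ∀ x, ∑ B ∈ fam n h m g i d, (if bad B x then 0 else per η i B ^ 2) ≤
      n * energy h m g (Function.update η r x) (i + 1) (d + 1) := by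
    intro x
    calc ∑ B ∈ fam n h m g i d, (if bad B x then 0 else per η i B ^ 2)
        ≤ ∑ B ∈ fam n h m g i d, ∑ j : Fin n,
            (if j ∈ res n h \ B then q x (insert j B) ^ 2 else 0) := by
          refine Finset.sum_le_sum fun B _ => ?_
          have hnn : ∀ j : Fin n,
              0 ≤ (if j ∈ res n h \ B then q x (insert j B) ^ 2 else 0) := by
            intro j; split_ifs
            · exact sq_nonneg _
            · exact le_rfl
          split_ifs with hb
          · exact Finset.sum_nonneg fun j _ => hnn j
          · simp only [bad, not_forall, not_lt] at hb
            obtain ⟨j, hj, hjq⟩ := hb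
            refine le_trans ?_ (Finset.single_le_sum (fun j _ => hnn j) (mem_univ j))
            rw [if_pos hj]
            exact sq_le_sq.2 hjq
      _ = ∑ j : Fin n, ∑ B ∈ fam n h m g i d,
            (if j ∈ res n h \ B then q x (insert j B) ^ 2 else 0) := Finset.sum_comm
      _ ≤ ∑ j : Fin n, energy h m g (Function.update η r x) (i + 1) (d + 1) := by
          refine Finset.sum_le_sum fun j _ => ?_
          rw [← Finset.sum_filter]
          have hinj : Set.InjOn (fun B : Finset (Fin n) => insert j B)
              ((fam n h m g i d).filter fun B => j ∈ res n h \ B) := by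
            intro B hB C hC hBC
            have hB2 := (mem_sdiff.1 (mem_filter.1 hB).2).2
            have hC2 := (mem_sdiff.1 (mem_filter.1 hC).2).2
            have := congrArg (fun D => Finset.erase D j) hBC
            simpa [erase_insert hB2, erase_insert hC2] using this
          rw [← Finset.sum_image (f := fun D => q x D ^ 2) hinj]
          refine Finset.sum_le_sum_of_subset_of_nonneg ?_ fun _ _ _ => sq_nonneg _
          intro D hD
          obtain ⟨B, hB, rfl⟩ := mem_image.1 hD
          have hB' := mem_filter.1 hB
          exact fam_insert_res hB'.1 (mem_sdiff.1 hB'.2).1 (mem_sdiff.1 hB'.2).2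
      _ = n * energy h m g (Function.update η r x) (i + 1) (d + 1) := by
          simp
  have hmarkov : ((univ.filter fun x => energy h m g (Function.update η r x) (i + 1) (d + 1) <
        S / (2 * n)).card : ℝ) * (S / 2) ≤ 2 ^ n / 2 ^ h * S := by
    refine le_trans ?_ htotal
    rw [← nsmul_eq_mul]
    refine le_trans (Finset.card_nsmul_le_sum _ _ _ ?_)
      (Finset.sum_le_sum_of_subset_of_nonneg (Finset.subset_univ _) fun x _ _ => ?_)
    · intro x hx
      have hx' := (mem_filter.1 hx).2
      have h1 := hgood x
      have h2 : ∑ B ∈ fam n h m g i d, (if bad B x then 0 else per η i B ^ 2) +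
          ∑ B ∈ fam n h m g i d, (if bad B x then per η i B ^ 2 else 0) = S := by
        rw [← Finset.sum_add_distrib, hS, energy]
        refine Finset.sum_congr rfl fun B _ => ?_
        split_ifs <;> simp
      rw [lt_div_iff₀ (by positivity)] at hx'
      linarith
    · refine Finset.sum_nonneg fun B _ => ?_
      split_ifs
      · exact sq_nonneg _
      · exact le_rfl
  have h3 : ((univ.filter fun x => energy h m g (Function.update η r x) (i + 1) (d + 1) <
        S / (2 * n)).card : ℝ) * S ≤ (2 ^ n * (2 / 2 ^ h)) * S := by
    have : (2 : ℝ) ^ n * (2 / 2 ^ h) * S = 2 * (2 ^ n / 2 ^ h * S) := by ring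
    rw [this]; linarith
  exact le_of_mul_le_mul_right h3 hpos

/-! ### The potential -/

open Classical in
/-- The potential after `i` rows: the least `2^(d-h)` over those `d ≤ h` for which the energy with
`d` reserved columns is at least `α^i ρ^d`, and `1` if there is no such `d`. Here `d` counts the
steps in which the energy failed to grow by the factor `α`. -/
noncomputable def pot {n : ℕ} (h m g : ℕ) (α ρ : ℝ) (η : Fin n → Fin n → Bool) (i : ℕ) : ℝ :=
  (range (h + 1)).inf' ⟨0, by simp⟩ fun d =>
    if α ^ i * ρ ^ d ≤ energy h m g η i d then (2 : ℝ) ^ d / 2 ^ h else 1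

lemma pot_le {n h m g i d : ℕ} {α ρ : ℝ} {η : Fin n → Fin n → Bool} (hd : d ≤ h)
    (hG : α ^ i * ρ ^ d ≤ energy h m g η i d) : pot h m g α ρ η i ≤ 2 ^ d / 2 ^ h := by
  unfold pot
  refine (Finset.inf'_le _ (mem_range.2 (Nat.lt_succ_of_le hd))).trans ?_
  rw [if_pos hG]

lemma two_pow_div_le_one {d h : ℕ} (hd : d ≤ h) : (2 : ℝ) ^ d / 2 ^ h ≤ 1 := by
  rw [div_le_one (by positivity)]
  exact pow_le_pow_right₀ (by norm_num) hd

lemma pot_le_one {n h m g i : ℕ} {α ρ : ℝ} {η : Fin n → Fin n → Bool} :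
    pot h m g α ρ η i ≤ 1 := by
  unfold pot
  refine (Finset.inf'_le _ (mem_range.2 (Nat.succ_pos h))).trans ?_
  split_ifs
  · exact two_pow_div_le_one (Nat.zero_le _)
  · exact le_rfl

lemma pot_nonneg {n h m g i : ℕ} {α ρ : ℝ} {η : Fin n → Fin n → Bool} :
    0 ≤ pot h m g α ρ η i := by
  unfold pot
  refine Finset.le_inf' _ _ fun d _ => ?_
  split_ifs <;> positivity

lemma pot_cases {n h m g i : ℕ} {α ρ : ℝ} (η : Fin n → Fin n → Bool) :
    pot h m g α ρ η i = 1 ∨ ∃ d < h, α ^ i * ρ ^ d ≤ energy h m g η i d ∧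
      pot h m g α ρ η i = 2 ^ d / 2 ^ h := by
  classical
  obtain ⟨d, hd, hd2⟩ := Finset.exists_mem_eq_inf' (s := range (h + 1)) ⟨0, by simp⟩ fun d =>
    if α ^ i * ρ ^ d ≤ energy h m g η i d then (2 : ℝ) ^ d / 2 ^ h else 1
  have hd' := mem_range.1 hd
  have hp : pot h m g α ρ η i =
      if α ^ i * ρ ^ d ≤ energy h m g η i d then (2 : ℝ) ^ d / 2 ^ h else 1 := by
    rw [← hd2]; unfold pot; congr
  split_ifs at hp with hG
  · rcases Nat.lt_succ_iff_lt_or_eq.1 hd' with h1 | h1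
    · exact Or.inr ⟨d, h1, hG, hp⟩
    · left; rw [hp, h1, div_self (by positivity)]
  · exact Or.inl hp

/-- In expectation over the new row the potential becomes at most `1 + 2ε` times its old value plus
`2/2^h`: it stays the same after a successful gain step, doubles when that fails (probability at
most `ε`), and jumps to `1` only when the floor step fails too. -/
lemma pot_step {n h m g i : ℕ} (hm : 0 < m) (η : Fin n → Fin n → Bool) {r : Fin n}
    (hr : r.1 + 1 + i = n) (hrh : 2 * h ≤ r.1)
    (hw : m + (i / m + 1) * (m + g) + 2 * h ≤ n) {α ε : ℝ} (hα : 4 ≤ α)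
    (hε : Real.exp 1 * (1 + 2 * (g : ℝ) / α) ^ (-(1 / 4 : ℝ)) ≤ ε) (hε0 : 0 ≤ ε) :
    ∑ x, pot h m g α (1 / (2 * n * α)) (Function.update η r x) (i + 1) ≤
      2 ^ n * ((1 + 2 * ε) * pot h m g α (1 / (2 * n * α)) η i + 2 / 2 ^ h) := by
  classical
  set ρ := 1 / (2 * n * α) with hρ
  have hn : (0 : ℝ) < n := by
    have : 0 < n := by omega
    exact_mod_cast this
  have hα0 : 0 < α := by linarith
  have hρ0 : 0 < ρ := by positivity
  have hcard : ∑ _x : Fin n → Bool, (1 : ℝ) = 2 ^ n := by simp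
  rcases pot_cases (h := h) (m := m) (g := g) (i := i) (α := α) (ρ := ρ) η with h1 | ⟨d, hd, hG, hp⟩
  · rw [h1]
    calc ∑ x, pot h m g α ρ (Function.update η r x) (i + 1) ≤ ∑ _x : Fin n → Bool, (1 : ℝ) :=
          Finset.sum_le_sum fun x _ => pot_le_one
      _ = 2 ^ n * 1 := by rw [hcard, mul_one]
      _ ≤ _ := by
          refine mul_le_mul_of_nonneg_left ?_ (by positivity)
          have : (0 : ℝ) ≤ 2 / 2 ^ h := by positivity
          linarith
  · have hpos : 0 < energy h m g η i d := lt_of_lt_of_le (by positivity) hG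
    have hE1 := (gain_step hm η hr hw hpos hα).trans
      (mul_le_mul_of_nonneg_left hε (by positivity))
    have hE2 := floor_step η hr hrh hd.le hpos
    set F1 := univ.filter fun x => energy h m g (Function.update η r x) (i + 1) d <
        α * energy h m g η i d with hF1
    set F2 := univ.filter fun x => energy h m g (Function.update η r x) (i + 1) (d + 1) <
        energy h m g η i d / (2 * n) with hF2
    have hpt : ∀ x, pot h m g α ρ (Function.update η r x) (i + 1) ≤
        2 ^ d / 2 ^ h + ((if x ∈ F1 then 1 else 0) * (2 * (2 ^ d / 2 ^ h)) +
          (if x ∈ F2 then 1 else 0)) := by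
      intro x
      have hp0 : (0 : ℝ) ≤ 2 ^ d / 2 ^ h := by positivity
      by_cases hx1 : x ∈ F1
      · by_cases hx2 : x ∈ F2
        · rw [if_pos hx1, if_pos hx2]
          have := pot_le_one (h := h) (m := m) (g := g) (i := i + 1) (α := α) (ρ := ρ)
            (η := Function.update η r x)
          linarith
        · rw [if_pos hx1, if_neg hx2]
          have hx2' : energy h m g η i d / (2 * n) ≤
              energy h m g (Function.update η r x) (i + 1) (d + 1) := by
            by_contra hc
            exact hx2 (by rw [hF2, mem_filter]; exact ⟨mem_univ _, not_le.1 hc⟩)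
          have := pot_le (h := h) (m := m) (g := g) (i := i + 1) (d := d + 1) (α := α) (ρ := ρ)
            (η := Function.update η r x) hd (by
              refine le_trans ?_ hx2'
              rw [le_div_iff₀ (by positivity)]
              refine le_trans (le_of_eq ?_) hG
              rw [pow_succ, pow_succ]
              have : α * ρ * (2 * n) = 1 := by rw [hρ]; field_simp
              linear_combination (α ^ i * ρ ^ d) * this)
          rw [pow_succ] at this
          have e : (2 : ℝ) ^ d * 2 / 2 ^ h = 2 * (2 ^ d / 2 ^ h) := by ring
          rw [e] at this
          linarith
      · rw [if_neg hx1]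
        have hx1' : α * energy h m g η i d ≤
            energy h m g (Function.update η r x) (i + 1) d := by
          by_contra hc
          exact hx1 (by rw [hF1, mem_filter]; exact ⟨mem_univ _, not_le.1 hc⟩)
        have := pot_le (h := h) (m := m) (g := g) (i := i + 1) (d := d) (α := α) (ρ := ρ)
            (η := Function.update η r x) hd.le (by
              refine le_trans ?_ hx1'
              rw [pow_succ]
              nlinarith)
        have h0 : (0 : ℝ) ≤ if x ∈ F2 then 1 else 0 := by split_ifs <;> norm_num
        linarith
    have hcount : ∀ F : Finset (Fin n → Bool), ∑ x, (if x ∈ F then (1 : ℝ) else 0) = F.card := by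
      intro F; simp
    refine (Finset.sum_le_sum fun x _ => hpt x).trans ?_
    rw [Finset.sum_add_distrib, Finset.sum_add_distrib, ← Finset.sum_mul, hcount, hcount,
      Finset.sum_const, card_univ, nsmul_eq_mul, hp]
    have hc : ((Fintype.card (Fin n → Bool) : ℕ) : ℝ) = 2 ^ n := by simp
    rw [hc]
    have := mul_le_mul_of_nonneg_right hE1
      (show (0 : ℝ) ≤ 2 * (2 ^ d / 2 ^ h) by positivity)
    have e : (2 : ℝ) ^ n * ((1 + 2 * ε) * (2 ^ d / 2 ^ h) + 2 / 2 ^ h) =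
      2 ^ n * (2 ^ d / 2 ^ h) + (2 ^ n * ε * (2 * (2 ^ d / 2 ^ h)) + 2 ^ n * (2 / 2 ^ h)) := by
      ring
    rw [e]
    gcongr

/-- Up to step `n - R` the current window lies entirely above the reserved columns. -/
lemma window_fits {n R h m g i : ℕ} (hm : 0 < m) (hRn : R ≤ n) (hR : 2 * h + 3 * m ≤ R)
    (hg : n * g ≤ m * m) (hi : i < n - R) : m + (i / m + 1) * (m + g) + 2 * h ≤ n := by
  have h1 := (div_bounds (i := i) hm).1
  have h2 : (i / m + 1) * g ≤ m := by
    refine Nat.le_of_mul_le_mul_right ?_ hm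
    calc (i / m + 1) * g * m = ((i / m) * m + m) * g := by ring
      _ ≤ n * g := Nat.mul_le_mul_right _ (by omega)
      _ ≤ m * m := hg
  have h3 : (i / m + 1) * (m + g) = (i / m) * m + m + (i / m + 1) * g := by ring
  omega

lemma sum_pot_le {n R h m g : ℕ} (hm : 0 < m) (hRn : R ≤ n) (hR : 2 * h + 3 * m ≤ R)
    (hg : n * g ≤ m * m) {α ε : ℝ} (hα : 4 ≤ α)
    (hε : Real.exp 1 * (1 + 2 * (g : ℝ) / α) ^ (-(1 / 4 : ℝ)) ≤ ε) (hε0 : 0 ≤ ε) :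
    ∀ i ≤ n - R, ∑ η : Fin n → Fin n → Bool, pot h m g α (1 / (2 * n * α)) η i ≤
      (2 ^ n) ^ n * ((1 + 2 * ε) ^ i * ((1 + 2 * i) / 2 ^ h)) := by
  set ρ := 1 / (2 * n * α) with hρ
  have hcard : ((Fintype.card (Fin n → Fin n → Bool) : ℕ) : ℝ) = (2 ^ n) ^ n := by simp
  intro i
  induction i with
  | zero =>
    intro _
    have : ∀ η : Fin n → Fin n → Bool, pot h m g α ρ η 0 ≤ 1 / 2 ^ h := by
      intro η
      have h0 : (∅ : Finset (Fin n)) ∈ fam n h m g 0 0 := by simp [mem_fam]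
      have := pot_le (h := h) (m := m) (g := g) (i := 0) (d := 0) (α := α) (ρ := ρ)
        (η := η) (Nat.zero_le _) (by
          rw [pow_zero, pow_zero, one_mul, energy]
          refine le_trans ?_ (Finset.single_le_sum (fun _ _ => sq_nonneg _) h0)
          rw [per_zero]; norm_num)
      simpa using this
    refine (Finset.sum_le_sum fun η _ => this η).trans ?_
    rw [Finset.sum_const, card_univ, nsmul_eq_mul, hcard]
    simp
  | succ i ih =>
    intro hi
    have ih' := ih (by omega)
    let r : Fin n := ⟨n - 1 - i, by omega⟩
    have hr : r.1 + 1 + i = n := by simp only [r]; omega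
    have hstep : ∑ η : Fin n → Fin n → Bool, ∑ x,
        pot h m g α ρ (Function.update η r x) (i + 1) ≤
        ∑ η : Fin n → Fin n → Bool, 2 ^ n * ((1 + 2 * ε) * pot h m g α ρ η i + 2 / 2 ^ h) :=
      Finset.sum_le_sum fun η _ => pot_step hm η hr (by simp only [r]; omega)
        (window_fits hm hRn hR hg (by omega)) hα hε hε0
    rw [sum_update_avg (fun η => pot h m g α ρ η (i + 1)) r, ← Finset.mul_sum,
      Finset.sum_add_distrib, ← Finset.mul_sum, Finset.sum_const, card_univ, nsmul_eq_mul,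
      hcard] at hstep
    have hc2 : ((Fintype.card (Fin n → Bool) : ℕ) : ℝ) = 2 ^ n := by simp
    rw [hc2] at hstep
    have hstep' := le_of_mul_le_mul_left hstep (by positivity)
    refine hstep'.trans ((add_le_add_left (mul_le_mul_of_nonneg_left ih'
      (by positivity)) _).trans ?_)
    have h1 : (1 : ℝ) ≤ (1 + 2 * ε) ^ (i + 1) := one_le_pow₀ (by linarith)
    have e : (2 ^ n : ℝ) ^ n * ((1 + 2 * ε) ^ (i + 1) * ((1 + 2 * ((i + 1 : ℕ) : ℝ)) / 2 ^ h)) =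
        (1 + 2 * ε) * ((2 ^ n) ^ n * ((1 + 2 * ε) ^ i * ((1 + 2 * i) / 2 ^ h))) +
        (2 ^ n) ^ n * ((1 + 2 * ε) ^ (i + 1) * (2 / 2 ^ h)) := by
      push_cast; ring
    rw [e]
    gcongr
    exact le_mul_of_one_le_left (by positivity) h1

/-! ### Assembling the bounds -/

open Classical in
/-- The non-asymptotic form of the theorem. If no column set is `lam`-heavy then the potential after
`n - R` rows equals `1`, so the failure probability is at most the expected potential. -/
lemma prob_core {n R h m g : ℕ} (hm : 0 < m) (hRn : R ≤ n) (hR : 2 * h + 3 * m ≤ R)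
    (hg : n * g ≤ m * m) {α ε lam : ℝ} (hα : 4 ≤ α)
    (hε : Real.exp 1 * (1 + 2 * (g : ℝ) / α) ^ (-(1 / 4 : ℝ)) ≤ ε) (hε0 : 0 ≤ ε)
    (hlam0 : 0 ≤ lam)
    (hlam : lam ^ 2 ≤ α ^ (n - R) * (1 / (2 * n * α)) ^ h / 2 ^ n) :
    1 - (1 + 2 * ε) ^ n * ((1 + 2 * n) / 2 ^ h) ≤
      prob n fun M => ∃ B : Finset (Fin n), B.card = n - R ∧
          lam ≤ |permOn M (univ.filter fun i : Fin n => R ≤ (i : ℕ)) B| := by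
  set P : Matrix (Fin n) (Fin n) ℝ → Prop := fun M => ∃ B : Finset (Fin n), B.card = n - R ∧
          lam ≤ |permOn M (univ.filter fun i : Fin n => R ≤ (i : ℕ)) B| with hP
  set ρ := 1 / (2 * n * α) with hρ
  have hn0 : 0 < n := by omega
  have hn : (1 : ℝ) ≤ n := by exact_mod_cast hn0
  have hρ0 : 0 < ρ := by positivity
  have hρ1 : ρ ≤ 1 := by
    rw [hρ, div_le_one (by positivity)]; nlinarith
  have hrows : lastRows n (n - R) = univ.filter fun i : Fin n => R ≤ (i : ℕ) := by
    ext a; simp only [lastRows, mem_filter, mem_univ, true_and]; omega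
  have hfail : ∀ η : Fin n → Fin n → Bool, ¬ P (swMat η) → pot h m g α ρ η (n - R) = 1 := by
    intro η hη
    rcases pot_cases (h := h) (m := m) (g := g) (i := n - R) (α := α) (ρ := ρ) η with
      h1 | ⟨d, hd, hG, hp⟩
    · exact h1
    · exfalso
      apply hη
      by_contra hno
      have hlt : ∀ B ∈ fam n h m g (n - R) d, per η (n - R) B ^ 2 < lam ^ 2 := by
        intro B hB
        by_contra hc
        refine hno ⟨B, (mem_fam.1 hB).1, ?_⟩
        rw [← hrows]
        rw [← abs_of_nonneg hlam0]
        exact sq_le_sq.1 (not_lt.1 hc)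
      have hpos : 0 < energy h m g η (n - R) d := lt_of_lt_of_le (by positivity) hG
      have hne : (fam n h m g (n - R) d).Nonempty := by
        by_contra hc
        rw [not_nonempty_iff_eq_empty] at hc
        rw [energy, hc] at hpos
        simp at hpos
      have h2 : energy h m g η (n - R) d < ∑ B ∈ fam n h m g (n - R) d, lam ^ 2 :=
        Finset.sum_lt_sum_of_nonempty hne hlt
      rw [Finset.sum_const, nsmul_eq_mul] at h2
      have h3 : ((fam n h m g (n - R) d).card : ℝ) ≤ 2 ^ n := by
        have := Finset.card_le_univ (fam n h m g (n - R) d)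
        rw [Fintype.card_finset, Fintype.card_fin] at this
        exact_mod_cast this
      have h4 : ρ ^ h ≤ ρ ^ d := pow_le_pow_of_le_one hρ0.le hρ1 hd.le
      have h5 : α ^ (n - R) * ρ ^ h ≤ α ^ (n - R) * ρ ^ d :=
        mul_le_mul_of_nonneg_left h4 (by positivity)
      have h6 := mul_le_mul_of_nonneg_right h3 (sq_nonneg lam)
      rw [le_div_iff₀ (by positivity)] at hlam
      linarith
  have hswap : (univ.filter fun ω : Fin n → Fin n → Bool => ¬ P (symMat n ω)).card =
      (univ.filter fun η : Fin n → Fin n → Bool => ¬ P (swMat η)).card := by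
    refine Finset.card_bij' (fun ω _ => fun i j => ω j i) (fun ω _ => fun i j => ω j i)
      ?_ ?_ (fun _ _ => rfl) (fun _ _ => rfl)
    · intro ω hω
      exact mem_filter.2 ⟨mem_univ _, (mem_filter.1 hω).2⟩
    · intro ω hω
      exact mem_filter.2 ⟨mem_univ _, (mem_filter.1 hω).2⟩
  have hbad : ((univ.filter fun η : Fin n → Fin n → Bool => ¬ P (swMat η)).card : ℝ) ≤
      (2 ^ n) ^ n * ((1 + 2 * ε) ^ n * ((1 + 2 * n) / 2 ^ h)) := by
    calc ((univ.filter fun η : Fin n → Fin n → Bool => ¬ P (swMat η)).card : ℝ)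
        = ∑ η ∈ univ.filter fun η : Fin n → Fin n → Bool => ¬ P (swMat η),
            pot h m g α ρ η (n - R) := by
          rw [Finset.sum_congr rfl fun η hη => hfail η (mem_filter.1 hη).2]
          simp
      _ ≤ ∑ η : Fin n → Fin n → Bool, pot h m g α ρ η (n - R) :=
          Finset.sum_le_sum_of_subset_of_nonneg (filter_subset _ _) fun _ _ _ => pot_nonneg
      _ ≤ (2 ^ n) ^ n * ((1 + 2 * ε) ^ (n - R) * ((1 + 2 * ((n - R : ℕ) : ℝ)) / 2 ^ h)) :=
          sum_pot_le hm hRn hR hg hα hε hε0 (n - R) le_rfl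
      _ ≤ _ := by
          have h1 : (1 + 2 * ε) ^ (n - R) ≤ (1 + 2 * ε) ^ n :=
            pow_le_pow_right₀ (by linarith) (Nat.sub_le _ _)
          have h2 : ((n - R : ℕ) : ℝ) ≤ n := by exact_mod_cast Nat.sub_le _ _
          gcongr
  have hsum := Finset.card_filter_add_card_filter_not (s := (univ : Finset (Fin n → Fin n → Bool)))
    (fun ω => P (symMat n ω))
  have hc : ((Fintype.card (Fin n → Fin n → Bool) : ℕ) : ℝ) = (2 ^ n) ^ n := by simp
  rw [hswap, card_univ] at hsum
  have hsum' : ((univ.filter fun ω : Fin n → Fin n → Bool => P (symMat n ω)).card : ℝ) +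
      ((univ.filter fun η : Fin n → Fin n → Bool => ¬ P (swMat η)).card : ℝ) = (2 ^ n) ^ n := by
    rw [← hc, ← hsum]; push_cast; rfl
  unfold prob
  rw [pow_mul, le_div_iff₀ (by positivity)]
  have : (1 - (1 + 2 * ε) ^ n * ((1 + 2 * n) / 2 ^ h)) * ((2 : ℝ) ^ n) ^ n =
    (2 ^ n) ^ n - (2 ^ n) ^ n * ((1 + 2 * ε) ^ n * ((1 + 2 * n) / 2 ^ h)) := by ring
  have hfin : (2 ^ n) ^ n - (2 ^ n) ^ n * ((1 + 2 * ε) ^ n * ((1 + 2 * n) / 2 ^ h)) ≤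
      ((univ.filter fun ω : Fin n → Fin n → Bool => P (symMat n ω)).card : ℝ) := by
    linarith
  rw [this]
  refine hfin.trans (le_of_eq ?_)
  congr

/-! ### Choice of parameters -/

lemma exists_threshold {δ c : ℝ} (hδ0 : 0 < δ) (hc : 0 < c) :
    ∃ n₀ : ℕ, ∀ n : ℕ, n₀ ≤ n → 1 ≤ (n : ℝ) ∧ 42 ≤ δ * n ∧ 2450 ≤ δ ^ 2 * n ∧ 4 ≤ c * n ∧
      24 ≤ δ ^ 4 * n ∧ 2 * Real.log 2 - Real.log c ≤ 13 * δ * Real.log n := by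
  have lin : ∀ a b : ℝ, 0 < a → ∀ᶠ n : ℕ in Filter.atTop, b ≤ a * n := fun a b ha =>
    (Filter.Tendsto.const_mul_atTop ha tendsto_natCast_atTop_atTop).eventually_ge_atTop b
  have hlog : ∀ᶠ n : ℕ in Filter.atTop,
      2 * Real.log 2 - Real.log c ≤ 13 * δ * Real.log n :=
    (Filter.Tendsto.const_mul_atTop (by positivity)
      (Real.tendsto_log_atTop.comp tendsto_natCast_atTop_atTop)).eventually_ge_atTop _
  have := (Filter.eventually_ge_atTop (1 : ℕ)).and <| (lin δ 42 hδ0).and <|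
    (lin (δ ^ 2) 2450 (by positivity)).and <| (lin c 4 hc).and <|
    (lin (δ ^ 4) 24 (by positivity)).and hlog
  obtain ⟨N, hN⟩ := Filter.eventually_atTop.1 this
  exact ⟨N, fun n hn => ⟨by exact_mod_cast (hN n hn).1, (hN n hn).2⟩⟩

/-- The accumulated failure probability is at most `exp (-δ²n)`. -/
lemma failure_bound {δ : ℝ} {n h : ℕ} (hδ0 : 0 < δ) (hδ : δ < 1 / 16) (hn1 : 1 ≤ (n : ℝ))
    (hn2 : 2450 ≤ δ ^ 2 * n) (hn4 : 24 ≤ δ ^ 4 * n) (hh : δ * n / 4 - 1 ≤ (h : ℝ)) :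
    (1 + 2 * (δ ^ 2 / 2)) ^ n * ((1 + 2 * (n : ℝ)) / 2 ^ h) ≤ Real.exp (-δ ^ 2 * n) := by
  set x := δ ^ 2 * n with hx
  have h1 : (1 + 2 * (δ ^ 2 / 2)) ^ n ≤ Real.exp x := by
    calc (1 + 2 * (δ ^ 2 / 2)) ^ n ≤ Real.exp (δ ^ 2) ^ n := by
          gcongr
          linarith [Real.add_one_le_exp (δ ^ 2)]
      _ = Real.exp x := by rw [← Real.exp_nat_mul, hx, mul_comm]
  have h2 : Real.exp (5 / 2 * x) ≤ (2 : ℝ) ^ h := by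
    have e : (2 : ℝ) ^ h = Real.exp (h * Real.log 2) := by
      rw [Real.exp_nat_mul, Real.exp_log two_pos]
    rw [e]
    apply Real.exp_le_exp.2
    have hh' : 4 * x - 1 ≤ (h : ℝ) := by
      have : 4 * x ≤ δ * n / 4 := by
        rw [hx]
        have : 0 ≤ δ * n * (1 / 16 - δ) := by
          apply mul_nonneg (by positivity); linarith
        nlinarith
      linarith
    have := Real.log_two_gt_d9
    nlinarith
  have h3 : 1 + 2 * (n : ℝ) ≤ Real.exp (x / 2) := by
    have h := Real.quadratic_le_exp_of_nonneg (x := x / 2) (by linarith)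
    have : x ^ 2 = (δ ^ 4 * n) * n := by rw [hx]; ring
    nlinarith
  rw [← mul_div_assoc, div_le_iff₀ (by positivity)]
  calc (1 + 2 * (δ ^ 2 / 2)) ^ n * (1 + 2 * (n : ℝ)) ≤ Real.exp x * Real.exp (x / 2) := by gcongr
    _ = Real.exp (-δ ^ 2 * n) * Real.exp (5 / 2 * x) := by
        rw [← Real.exp_add, ← Real.exp_add]; congr 1; rw [hx]; ring
    _ ≤ _ := by gcongr

/-- The least energy `α^(n-R) ρ^h`, `ρ = 1/(2nα)`, guaranteed after `n - R` rows, averaged over at most `2^n`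
column sets, is at least `λ²` for `λ = n^((1/2-8δ)n)`. -/
lemma heavy_bound {δ c α : ℝ} {n R h : ℕ} (hn1 : 1 ≤ (n : ℝ)) (hc : 0 < c)
    (hc1 : c ≤ 1) (hα : c * n ≤ α) (hαn : α ≤ n) (hRn : R ≤ n) (hR : (R : ℝ) ≤ 2 * δ * n)
    (hh : 4 * h ≤ R) (hlog : 2 * Real.log 2 - Real.log c ≤ 13 * δ * Real.log n) :
    ((n : ℝ) ^ ((1 / 2 - 8 * δ) * (n : ℝ))) ^ 2 ≤ α ^ (n - R) * (1 / (2 * n * α)) ^ h / 2 ^ n := by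
  have hn0 : (0 : ℝ) < n := by linarith
  have hα0 : 0 < α := lt_of_lt_of_le (by positivity) hα
  apply (Real.log_le_log_iff (by positivity) (by positivity)).1
  rw [Real.log_div (by positivity) (by positivity), Real.log_mul (by positivity) (by positivity),
    Real.log_pow, Real.log_pow, Real.log_pow, Real.log_pow, Real.log_rpow hn0, one_div (2 * (n : ℝ) * α),
    Real.log_inv, Real.log_mul (by positivity) (by positivity),
    Real.log_mul (by positivity) (by positivity), Nat.cast_sub hRn]
  have hL : 0 ≤ Real.log n := Real.log_nonneg hn1
  have hlc : Real.log c ≤ 0 := Real.log_nonpos hc.le hc1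
  have h1 : Real.log c + Real.log n ≤ Real.log α := by
    rw [← Real.log_mul (by positivity) (by positivity)]
    exact Real.log_le_log (by positivity) hα
  have h2 : Real.log α ≤ Real.log n := Real.log_le_log hα0 hαn
  have hl2 : 0 ≤ Real.log 2 := (Real.log_pos one_lt_two).le
  have hRn' : (R : ℝ) ≤ n := by exact_mod_cast hRn
  have hh' : 4 * (h : ℝ) ≤ R := by exact_mod_cast hh
  have hh0 : (0 : ℝ) ≤ h := h.cast_nonneg
  have hR0 : (0 : ℝ) ≤ R := R.cast_nonneg
  have a1 : ((n : ℝ) - R) * (Real.log c + Real.log n) ≤ (n - R) * Real.log α :=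
    mul_le_mul_of_nonneg_left h1 (by linarith)
  have a2 : 0 ≤ R * -Real.log c := mul_nonneg hR0 (by linarith)
  have a3 : R * Real.log n ≤ 2 * δ * n * Real.log n := mul_le_mul_of_nonneg_right hR hL
  have a4 : h * Real.log α ≤ h * Real.log n := mul_le_mul_of_nonneg_left h2 hh0
  have a5 : 4 * h * Real.log n ≤ 2 * δ * n * Real.log n :=
    mul_le_mul_of_nonneg_right (by linarith) hL
  have a6 : h * Real.log 2 ≤ n * Real.log 2 := mul_le_mul_of_nonneg_right (by linarith) hl2
  have a7 := mul_le_mul_of_nonneg_left hlog hn0.le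
  push_cast
  linarith

/-- Propagation of heavy submatrices: for any fixed `0 < δ < 1/16` and all `n` sufficiently
large with respect to `δ`, if `R ∈ ℕ` satisfies `δn ≤ R ≤ 2δn`, then with probability at
least `1 - e^(-δ²n)` there is a subset `B` of size `n - R` such that
`M_n[{R+1,…,n}, B]` is `n^((1/2-8δ)n)`-heavy. -/
theorem grow_single_minor_weak (δ : ℝ) (hδ0 : 0 < δ) (hδ : δ < 1 / 16) :
    ∃ n₀ : ℕ, ∀ n : ℕ, n₀ ≤ n → ∀ R : ℕ, δ * n ≤ (R : ℝ) → (R : ℝ) ≤ 2 * δ * n →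
      1 - Real.exp (-δ ^ 2 * n) ≤
        prob n fun M => ∃ B : Finset (Fin n), B.card = n - R ∧
          (n : ℝ) ^ ((1 / 2 - 8 * δ) * (n : ℝ)) ≤
            |permOn M (univ.filter fun i : Fin n => R ≤ (i : ℕ)) B| := by
  set ε : ℝ := δ ^ 2 / 2 with hε
  have hε0 : 0 < ε := by positivity
  have he0 := Real.exp_pos 1
  have he1 : 1 ≤ Real.exp 1 := Real.one_le_exp zero_le_one
  -- `α = τ g` makes the failure probability of one gain step at most `ε`.
  set τ : ℝ := 2 * (ε / Real.exp 1) ^ 4 with hτ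
  have hτ0 : 0 < τ := by positivity
  have hε1 : ε ≤ 1 / 2 := by rw [hε]; nlinarith
  have hτ1 : τ ≤ 1 := by
    have h1 : ε / Real.exp 1 ≤ 1 / 2 := (div_le_self hε0.le he1).trans hε1
    have h2 : (ε / Real.exp 1) ^ 4 ≤ (1 / 2) ^ 4 := pow_le_pow_left₀ (by positivity) h1 4
    rw [hτ]; linarith
  set c : ℝ := τ * δ ^ 2 / 50 with hc
  have hc0 : 0 < c := by positivity
  have hc1 : c ≤ 1 := by
    have : δ ^ 2 ≤ 1 := by nlinarith
    have : τ * δ ^ 2 ≤ 1 * 1 := by gcongr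
    rw [hc]; linarith
  obtain ⟨n₀, hn₀⟩ := exists_threshold hδ0 hc0
  refine ⟨n₀, fun n hn R hR1 hR2 => ?_⟩
  obtain ⟨hn1, hnδ, hnδ2, hnc, hnδ4, hlog⟩ := hn₀ n hn
  have hn0 : (0 : ℝ) < n := by linarith
  have hRn : R ≤ n := by
    have : (R : ℝ) ≤ n := by nlinarith
    exact_mod_cast this
  set m := R / 6 with hm
  set h := R / 4 with hh
  set g := m * m / n with hg
  have hmR : (R : ℝ) ≤ 6 * m + 5 := by
    have : R ≤ 6 * m + 5 := by omega
    exact_mod_cast this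
  have hhR : (R : ℝ) ≤ 4 * h + 3 := by
    have : R ≤ 4 * h + 3 := by omega
    exact_mod_cast this
  have hm7 : δ * n / 7 ≤ m := by linarith
  have hm0 : 0 < m := by
    have : (0 : ℝ) < m := by linarith
    exact_mod_cast this
  have hng : n * g ≤ m * m := Nat.mul_div_le _ _
  have hgn : (g : ℝ) ≤ n := by
    have : g ≤ n := by
      rw [hg]
      apply Nat.div_le_of_le_mul
      have : m ≤ n := by omega
      gcongr
    exact_mod_cast this
  have hg50 : δ ^ 2 * n / 50 ≤ g := by
    have h1 : m * m < n * (g + 1) := Nat.lt_mul_div_succ _ (by exact_mod_cast hn0)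
    have h2 : (m : ℝ) * m < n * (g + 1) := by exact_mod_cast h1
    have h3 : (δ * n / 7) * (δ * n / 7) ≤ m * m := by gcongr
    have h4 : n * (δ ^ 2 * n / 49) < n * ((g : ℝ) + 1) := by
      calc n * (δ ^ 2 * n / 49) = (δ * n / 7) * (δ * n / 7) := by ring
        _ ≤ m * m := h3
        _ < _ := h2
    have h5 := lt_of_mul_lt_mul_left h4 hn0.le
    linarith
  have hg0 : (0 : ℝ) < g := by linarith
  have hα : c * n ≤ τ * g := by
    calc c * n = τ * (δ ^ 2 * n / 50) := by rw [hc]; ring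
      _ ≤ _ := by gcongr
  have hαn : τ * g ≤ n := by
    calc τ * g ≤ 1 * g := by gcongr
      _ ≤ n := by linarith
  have hsmall : Real.exp 1 * (1 + 2 * (g : ℝ) / (τ * g)) ^ (-(1 / 4 : ℝ)) ≤ ε := by
    have h1 : ((ε / Real.exp 1)⁻¹) ^ 4 ≤ 1 + 2 * (g : ℝ) / (τ * g) := by
      have : 2 * (g : ℝ) / (τ * g) = ((ε / Real.exp 1)⁻¹) ^ 4 := by
        rw [hτ]; field_simp
      rw [this]; linarith
    have h2 : (1 + 2 * (g : ℝ) / (τ * g)) ^ (-(1 / 4 : ℝ)) ≤ ε / Real.exp 1 := by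
      calc (1 + 2 * (g : ℝ) / (τ * g)) ^ (-(1 / 4 : ℝ))
          ≤ (((ε / Real.exp 1)⁻¹) ^ 4) ^ (-(1 / 4 : ℝ)) :=
            Real.rpow_le_rpow_of_nonpos (by positivity) h1 (by norm_num)
        _ = ε / Real.exp 1 := by
            rw [← Real.rpow_natCast, ← Real.rpow_mul (by positivity)]
            norm_num [Real.rpow_neg_one]
    calc _ ≤ Real.exp 1 * (ε / Real.exp 1) := by gcongr
      _ = ε := by field_simp
  have hcore := prob_core (n := n) (R := R) (h := h) (m := m) (g := g) hm0 hRn (by omega) hng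
    (by linarith) hsmall hε0.le (by positivity)
    (heavy_bound hn1 hc0 hc1 hα hαn hRn hR2 (by omega) hlog)
  have hfailure := failure_bound (h := h) hδ0 hδ hn1 hnδ2 hnδ4 (by linarith)
  linarith
end

section
/- Fix R, n ∈ ℕ. For k ∈ ℕ and reals N, λ > 0, let E(k,N,λ) be the event that there are at least N subsets B ⊆ {1,…,k+R} with |B| = k such that M_{k+R}[{R+1,…,k+R}, B] is λ-heavy. Then for any k ∈ ℕ with k + R ≤ n and any reals 0 < δ < 1/2, K > 1, λ > 0, N > 0, there is a partition E(k,N,λ) = E'(k,N,λ) ∪ E''(k,N,λ) into two disjoint events, each determined by M_{k+R}, such that, with N⁺ = RN/(8K), N⁻ = RN/(8n), λ⁺ = K^{1/2−δ}λ: (1) for every outcome M of M_{k+R} satisfying E(k,N,λ), Pr(E(k+1,N⁻,λ) | M_{k+R} = M) ≥ 1 − 2e^{−R/8}; (2) for every outcome M' satisfying E'(k,N,λ), Pr(E(k+1,N⁺,λ) | M_{k+R} = M') ≥ 1/3; (3) for every outcome M'' satisfying E''(k,N,λ), Pr(E(k+1,N⁻,λ⁺) | M_{k+R} = M'') ≥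 1 − 4K^{−δ}. -/
/-!
Adding a new row of signs `x` to the matrix, the permanent on a set `C` of `k + 1` old columns
becomes `∑ c ∈ C, x_c * per (C \ {c})` (`permOn_expand`), so only the off-diagonal part of the new
row matters, and its entries are independent uniform signs (`probExt_ge`).

For part (1), fix a heavy `k`-set `B` and condition on the signs in `B`. Each of the `R`
extensions `B ∪ {b}` becomes heavy for at least one value of `x_b`, independently over `b`, so by
Chernoff a quarter of the extensions are heavy except with probability `e^(-R/8)` (`good_ext`).
By Markov, half of the heavy `B` have this property except with probability `2e^(-R/8)`, and
each `(k+1)`-set extends at most `k + 1 ≤ n` sets `B` (`count_ge_const`).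

For parts (2) and (3), let `h C` be the number of heavy `k`-subsets of a `(k+1)`-set `C`. Double
counting gives `∑ h C ≥ R * N` (`sum_heavyIn`). The event `E'` says that the sets with
`h C ≤ K` contribute at least half of `R * N`; otherwise those with `h C > K` do. In the first case
each `C` with `h C ≥ 1` is heavy with probability at least `1/2` (`half_heavy`). In the second,
the Erdős–Littlewood–Offord inequality (`littlewood_offord`, `small_ball`) shows that `C` fails to
be `K^(1/2-δ) λ`-heavy with probability at most `2K^(-δ)`. Markov's inequality for the total
weight of the failing sets finishes both cases (`count_ge_weight`).
-/

open Finset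

/-- The random symmetric extension of a fixed `n' × n'` matrix `M` to an `n × n` matrix:
the top-left `n' × n'` block is `M`, and the remaining entries are Rademacher values
determined symmetrically by the Boolean data `ω`. As `ω` ranges uniformly over all Boolean
data, the new entries (on and above the diagonal) are i.i.d. Rademacher random variables. -/
noncomputable def extSym {n' : ℕ} (n : ℕ) (M : Matrix (Fin n') (Fin n') ℝ)
    (ω : Fin n → Fin n → Bool) : Matrix (Fin n) (Fin n) ℝ :=
  fun i j =>
    if h : (i : ℕ) < n' ∧ (j : ℕ) < n' then M ⟨i, h.1⟩ ⟨j, h.2⟩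
    else if i ≤ j then rad (ω i j) else rad (ω j i)

open Classical in
/-- The probability of the event `P` for the random symmetric extension of `M` to size `n`
(i.e. conditionally on the outcome `M` for the top-left block). -/
noncomputable def probExt {n' : ℕ} (n : ℕ) (M : Matrix (Fin n') (Fin n') ℝ)
    (P : Matrix (Fin n) (Fin n) ℝ → Prop) : ℝ :=
  ((univ.filter fun ω : Fin n → Fin n → Bool => P (extSym n M ω)).card : ℝ) / 2 ^ (n * n)

open Classical in
/-- The event `E(k, N, λ)`: there are at least `N` subsets `B` of size `k` such that the
submatrix of `M` with rows `{R+1, …, k+R}` and columns `B` is `λ`-heavy. (Stated for a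
square matrix of any size `s`; in the statement below `s = k + R` or `s = (k+1) + R`.) -/
def Ev (R k : ℕ) (N lam : ℝ) {s : ℕ} (M : Matrix (Fin s) (Fin s) ℝ) : Prop :=
  N ≤ ((univ.filter fun B : Finset (Fin s) => B.card = k ∧
    lam ≤ |permOn M (univ.filter fun i : Fin s => R ≤ (i : ℕ)) B|).card : ℝ)

/-! ### Expansion of the permanent along the new row -/

/-- The permanent of an array is invariant under relabelling of rows and columns. -/
lemma perm_congr {α α' β β' : Type*} [Fintype α] [Fintype α'] [Fintype β] [Fintype β']
    [DecidableEq α] [DecidableEq α'] [DecidableEq β] [DecidableEq β']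
    (e : α ≃ α') (e' : β ≃ β') (f : α' → β' → ℝ) :
    ∑ σ : α ≃ β, ∏ i, f (e i) (e' (σ i)) = ∑ σ : α' ≃ β', ∏ i, f i (σ i) := by
  refine Fintype.sum_equiv (Equiv.equivCongr e e') _ _ fun σ => ?_
  refine Fintype.prod_equiv e _ _ fun i => ?_
  simp

/-- Laplace-type expansion of the permanent of an array along the distinguished row `none`. -/
lemma perm_option {α β : Type*} [Fintype α] [Fintype β] [DecidableEq α] [DecidableEq β]
    (f : Option α → β → ℝ) :
    ∑ σ : Option α ≃ β, ∏ i, f i (σ i) =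
      ∑ x : β, f none x * ∑ τ : α ≃ {y : β // y ≠ x}, ∏ a, f (some a) (τ a).1 := by
  rw [← (Equiv.sigmaFiberEquiv (fun σ : Option α ≃ β => σ none)).sum_comp, Fintype.sum_sigma]
  refine Finset.sum_congr rfl fun x _ => ?_
  rw [Finset.mul_sum]
  refine Fintype.sum_equiv (Equiv.optionSubtype x) _ _ fun σ => ?_
  rw [Fintype.prod_option]
  have := σ.2
  simp only [Equiv.sigmaFiberEquiv, Equiv.coe_fn_mk, Equiv.coe_optionSubtype_apply_apply]
  rw [this]

/-- Expansion of `permOn` along the last row, for column sets avoiding the last column. -/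
lemma permOn_expand {s : ℕ} (M : Matrix (Fin s) (Fin s) ℝ)
    (M' : Matrix (Fin (s + 1)) (Fin (s + 1)) ℝ)
    (hM : ∀ i j : Fin s, M' i.castSucc j.castSucc = M i j)
    (A : Finset (Fin s)) (A' : Finset (Fin (s + 1)))
    (hA : A' = insert (Fin.last s) (A.map Fin.castSuccEmb)) (C : Finset (Fin s)) :
    permOn M' A' (C.map Fin.castSuccEmb) =
      ∑ b ∈ C, M' (Fin.last s) b.castSucc * permOn M A (C.erase b) := by
  have hf : Function.Bijective (fun o : Option {x // x ∈ A} =>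
      (o.elim ⟨Fin.last s, by simp [hA]⟩ (fun a => ⟨a.1.castSucc, by simp [hA]⟩) :
        {x // x ∈ A'})) := by
    constructor
    · rintro (_ | a) (_ | b) h
      · rfl
      · simp only [Option.elim, Subtype.mk.injEq] at h
        exact absurd h.symm (Fin.castSucc_lt_last _).ne
      · simp only [Option.elim, Subtype.mk.injEq] at h
        exact absurd h (Fin.castSucc_lt_last _).ne
      · simp only [Option.elim, Subtype.mk.injEq] at h
        rw [Subtype.ext (Fin.castSucc_injective _ h)]
    · rintro ⟨y, hy⟩
      have hy' := hy
      rw [hA, Finset.mem_insert, Finset.mem_map] at hy'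
      rcases hy' with rfl | ⟨a, ha, rfl⟩
      · exact ⟨none, rfl⟩
      · exact ⟨some ⟨a, ha⟩, rfl⟩
  have hg : Function.Bijective (fun c : {x // x ∈ C} =>
      (⟨c.1.castSucc, by simp⟩ : {x // x ∈ C.map Fin.castSuccEmb})) := by
    constructor
    · rintro a b h
      simp only [Subtype.mk.injEq] at h
      exact Subtype.ext (Fin.castSucc_injective _ h)
    · rintro ⟨y, hy⟩
      obtain ⟨a, ha, rfl⟩ := Finset.mem_map.1 hy
      exact ⟨⟨a, ha⟩, rfl⟩
  unfold permOn
  rw [← perm_congr (Equiv.ofBijective _ hf) (Equiv.ofBijective _ hg)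
    (fun i j => M' i.1 j.1)]
  rw [perm_option (fun (i : Option {x // x ∈ A}) (j : {x // x ∈ C}) =>
    M' (Equiv.ofBijective _ hf i).1 (Equiv.ofBijective _ hg j).1)]
  rw [← Finset.sum_coe_sort C]
  refine Finset.sum_congr rfl fun x _ => ?_
  congr 1
  have hk : ∀ y : Fin s, y ∈ C.erase x.1 ↔ ∃ h : y ∈ C, (⟨y, h⟩ : {x // x ∈ C}) ≠ x := by
    intro y
    rw [Finset.mem_erase]
    constructor
    · rintro ⟨h1, h2⟩
      exact ⟨h2, fun h => h1 (congrArg Subtype.val h)⟩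
    · rintro ⟨h1, h2⟩
      exact ⟨fun h => h2 (Subtype.ext h), h1⟩
  let e : {y : {x // x ∈ C} // y ≠ x} ≃ {y // y ∈ C.erase x.1} :=
    { toFun := fun y => ⟨y.1.1, (hk _).2 ⟨y.1.2, y.2⟩⟩
      invFun := fun y => ⟨⟨y.1, ((hk _).1 y.2).1⟩, ((hk _).1 y.2).2⟩
      left_inv := fun _ => rfl
      right_inv := fun _ => rfl }
  refine Eq.trans ?_ (perm_congr (Equiv.refl _) e (fun (i : {x // x ∈ A}) (j : {y // y ∈ C.erase x.1}) => M i.1 j.1))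
  exact Finset.sum_congr rfl fun τ _ => Finset.prod_congr rfl fun a _ => hM _ _

/-! ### Reduction to the new row -/

/-- Pulling back along an injection of coordinate sets preserves uniform measure on the cube. -/
lemma card_comp_injective {α β : Type*} [Fintype α] [Fintype β] [DecidableEq α] [DecidableEq β]
    (f : α → β) (hf : Function.Injective f) (Q : (α → Bool) → Prop) [DecidablePred Q]
    [DecidablePred fun ω : β → Bool => Q (ω ∘ f)] :
    #{ω : β → Bool | Q (ω ∘ f)} * 2 ^ Fintype.card α
      = #{x : α → Bool | Q x} * 2 ^ Fintype.card β := by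
  classical
  let γ := {y // y ∉ Set.range f}
  let e : α ⊕ γ ≃ β :=
    (Equiv.sumCongr (Equiv.ofInjective f hf) (Equiv.refl _)).trans (Equiv.Set.sumCompl _)
  have he : ∀ a, e (Sum.inl a) = f a := fun a => rfl
  have hc : Fintype.card β = Fintype.card α + Fintype.card γ := by
    rw [← Fintype.card_sum]; exact (Fintype.card_congr e).symm
  let E : (β → Bool) ≃ (α → Bool) × (γ → Bool) :=
    (Equiv.arrowCongr e.symm (Equiv.refl _)).trans (Equiv.sumArrowEquivProdArrow _ _ _)
  have hE : ∀ ω, (E ω).1 = ω ∘ f := fun ω => rfl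
  have h1 : #{ω : β → Bool | Q (ω ∘ f)} =
      #(({x : α → Bool | Q x} : Finset _) ×ˢ (univ : Finset (γ → Bool))) := by
    refine Finset.card_equiv E fun ω => ?_
    simp [hE]
  rw [h1, Finset.card_product, hc, pow_add, Finset.card_univ, Fintype.card_fun, Fintype.card_bool]
  ring

open Classical in
/-- To bound `probExt` from below for an event implied by a condition `Q` on the entries of the
new row outside the diagonal, it suffices to count the rows violating `Q`. -/
lemma probExt_ge {s : ℕ} (M : Matrix (Fin s) (Fin s) ℝ)
    (P : Matrix (Fin (s + 1)) (Fin (s + 1)) ℝ → Prop) (Q : (Fin s → Bool) → Prop) (ρ : ℝ)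
    (hQ : (#{x : Fin s → Bool | ¬ Q x} : ℝ) ≤ ρ * 2 ^ s)
    (h : ∀ ω, Q (fun i => ω i.castSucc (Fin.last s)) → P (extSym (s + 1) M ω)) :
    1 - ρ ≤ probExt (s + 1) M P := by
  have hinj : Function.Injective
      (fun i : Fin s => ((i.castSucc, Fin.last s) : Fin (s + 1) × Fin (s + 1))) := by
    intro i j hij
    exact Fin.castSucc_injective _ (Prod.ext_iff.1 hij).1
  have h1 := card_comp_injective _ hinj (fun x => ¬ Q x)
  have h2 : #{ω : Fin (s + 1) × Fin (s + 1) → Bool | ¬ Q (ω ∘ fun i : Fin s =>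
        ((i.castSucc, Fin.last s) : Fin (s + 1) × Fin (s + 1)))} =
      #{ω : Fin (s + 1) → Fin (s + 1) → Bool | ¬ Q (fun i => ω i.castSucc (Fin.last s))} := by
    refine Finset.card_equiv (Equiv.curry _ _ _) fun ω => ?_
    simp only [Finset.mem_filter, Finset.mem_univ, true_and]
    rfl
  rw [h2] at h1
  simp only [Fintype.card_fin, Fintype.card_prod] at h1
  have h3 := Finset.card_filter_add_card_filter_not (s := (univ : Finset
    (Fin (s + 1) → Fin (s + 1) → Bool))) (fun ω => Q (fun i => ω i.castSucc (Fin.last s)))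
  have h4 : #{ω : Fin (s + 1) → Fin (s + 1) → Bool | Q (fun i => ω i.castSucc (Fin.last s))} ≤
      #{ω : Fin (s + 1) → Fin (s + 1) → Bool | P (extSym (s + 1) M ω)} :=
    Finset.card_le_card (Finset.monotone_filter_right _ fun ω _ => h ω)
  have h5 : #(univ : Finset (Fin (s + 1) → Fin (s + 1) → Bool)) = 2 ^ ((s + 1) * (s + 1)) := by
    simp [Finset.card_univ, pow_mul]
  rw [h5] at h3
  unfold probExt
  rw [le_div_iff₀ (by positivity)]
  generalize (s + 1) * (s + 1) = T at *
  have h1' : (#{ω : Fin (s + 1) → Fin (s + 1) → Bool |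
      ¬ Q (fun i => ω i.castSucc (Fin.last s))} : ℝ) * 2 ^ s =
        #{x : Fin s → Bool | ¬ Q x} * 2 ^ T := by exact_mod_cast h1
  have h3' : (#{ω : Fin (s + 1) → Fin (s + 1) → Bool |
      Q (fun i => ω i.castSucc (Fin.last s))} : ℝ) + #{ω : Fin (s + 1) → Fin (s + 1) → Bool |
      ¬ Q (fun i => ω i.castSucc (Fin.last s))} = 2 ^ T := by exact_mod_cast h3
  have h4' : (#{ω : Fin (s + 1) → Fin (s + 1) → Bool |
      Q (fun i => ω i.castSucc (Fin.last s))} : ℝ) ≤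
      #{ω : Fin (s + 1) → Fin (s + 1) → Bool | P (extSym (s + 1) M ω)} := by exact_mod_cast h4
  have hs : (0 : ℝ) < 2 ^ s := by positivity
  have hT : (0 : ℝ) < 2 ^ T := by positivity
  have h6 : (#{ω : Fin (s + 1) → Fin (s + 1) → Bool |
      ¬ Q (fun i => ω i.castSucc (Fin.last s))} : ℝ) ≤ ρ * 2 ^ T := by
    refine le_of_mul_le_mul_right ?_ hs
    rw [h1']
    calc _ ≤ ρ * 2 ^ s * 2 ^ T := by gcongr
      _ = _ := by ring
  linarith

/-! ### Estimates on the discrete cube -/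

lemma rad_not (b : Bool) : rad (!b) = -rad b := by cases b <;> simp [rad]

lemma rad_cases (b : Bool) : rad b = 1 ∨ rad b = -1 := by cases b <;> simp [rad]

/-- A central binomial bound, with `2 * m + 1` chosen so that the induction closes. -/
lemma centralBinom_sq_le (m : ℕ) : m.centralBinom ^ 2 * (2 * m + 1) ≤ 16 ^ m := by
  induction m with
  | zero => simp
  | succ m ih =>
    have h := Nat.succ_mul_centralBinom_succ m
    have h1 : (m + 1) ^ 2 * ((m + 1).centralBinom ^ 2 * (2 * (m + 1) + 1)) ≤
        (m + 1) ^ 2 * 16 ^ (m + 1) := by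
      calc (m + 1) ^ 2 * ((m + 1).centralBinom ^ 2 * (2 * (m + 1) + 1))
          = ((m + 1) * (m + 1).centralBinom) ^ 2 * (2 * m + 3) := by ring
        _ = (m.centralBinom ^ 2 * (2 * m + 1)) * (4 * ((2 * m + 1) * (2 * m + 3))) := by
          rw [h]; ring
        _ ≤ 16 ^ m * (4 * (4 * (m + 1) ^ 2)) := by
          refine Nat.mul_le_mul ih ?_
          nlinarith
        _ = _ := by ring
    exact le_of_mul_le_mul_left h1 (by positivity)

lemma choose_half_sq_le (m : ℕ) : (m.choose (m / 2)) ^ 2 * m ≤ 4 ^ m := by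
  rcases Nat.even_or_odd' m with ⟨j, rfl | rfl⟩
  · have h := centralBinom_sq_le j
    rw [Nat.centralBinom_eq_two_mul_choose] at h
    rw [Nat.mul_div_cancel_left _ (by norm_num), pow_mul]
    norm_num
    nlinarith
  · have h := centralBinom_sq_le (j + 1)
    have h1 : (2 * j + 1) / 2 = j := by omega
    have h2 : (j + 1).centralBinom = 2 * (2 * j + 1).choose j := by
      rw [Nat.centralBinom_eq_two_mul_choose, show 2 * (j + 1) = 2 * j + 1 + 1 by ring,
        Nat.choose_succ_succ, Nat.choose_symm_half]
      ring
    rw [h2] at h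
    rw [h1]
    have h3 : (4 : ℕ) ^ (2 * j + 1) = 4 * 16 ^ j := by
      rw [pow_succ, pow_mul]; norm_num [mul_comm]
    rw [h3]
    rw [pow_succ 16] at h
    nlinarith [Nat.zero_le ((2 * j + 1).choose j ^ 2)]

open Classical in
/-- Markov's inequality for a weighted count of failures: if every object of positive weight
fails with probability at most `ρ`, then the failing objects make up a fraction `θ` of the
total weight with probability at most `ρ / θ`. -/
lemma markov_weight {X ι : Type*} [Fintype X] (𝒞 : Finset ι) (w : ι → ℝ)
    (hw : ∀ C ∈ 𝒞, 0 ≤ w C) (S : ℝ) (hSdef : S = ∑ C ∈ 𝒞, w C) (hS : 0 < S)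
    (F : X → ι → Prop) [∀ x C, Decidable (F x C)] (ρ θ : ℝ)
    (hF : ∀ C ∈ 𝒞, w C ≠ 0 → (#{x | F x C} : ℝ) ≤ ρ * Fintype.card X) :
    (#{x | θ * S ≤ ∑ C ∈ 𝒞 with F x C, w C} : ℝ) * θ ≤ ρ * Fintype.card X := by
  have h1 : ∑ x : X, ∑ C ∈ 𝒞 with F x C, w C ≤ S * (ρ * Fintype.card X) := by
    simp only [Finset.sum_filter]
    rw [Finset.sum_comm, hSdef, Finset.sum_mul]
    refine Finset.sum_le_sum fun C hC => ?_
    rw [← Finset.sum_filter, Finset.sum_const, nsmul_eq_mul, mul_comm]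
    by_cases h0 : w C = 0
    · simp [h0]
    · exact mul_le_mul_of_nonneg_left (hF C hC h0) (hw C hC)
  have h2 : (#{x | θ * S ≤ ∑ C ∈ 𝒞 with F x C, w C} : ℝ) * (θ * S) ≤
      ∑ x : X, ∑ C ∈ 𝒞 with F x C, w C := by
    rw [← nsmul_eq_mul, ← Finset.sum_const]
    calc _ ≤ ∑ x with θ * S ≤ ∑ C ∈ 𝒞 with F x C, w C, ∑ C ∈ 𝒞 with F x C, w C :=
          Finset.sum_le_sum fun x hx => (Finset.mem_filter.1 hx).2
      _ ≤ _ := Finset.sum_le_sum_of_subset_of_nonneg (Finset.filter_subset _ _)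
          fun x _ _ => Finset.sum_nonneg fun C hC => hw C (Finset.mem_filter.1 hC).1
  refine le_of_mul_le_mul_right ?_ hS
  linarith

section Cube

variable {V : Type*} [Fintype V] [DecidableEq V]

open Classical in
/-- Flipping the sign of a coordinate with coefficient at least `lam` in absolute value moves
the sum by at least `2 * lam`, so at most half of all sign patterns give a sum in
`(-lam, lam)`. -/
lemma half_heavy (a : V → ℝ) (C : Finset V) (lam : ℝ) (b : V) (hb : b ∈ C)
    (hlam : lam ≤ |a b|) :
    (#{x : V → Bool | ¬ lam ≤ |∑ c ∈ C, rad (x c) * a c|} : ℝ) ≤ 1 / 2 * 2 ^ Fintype.card V := by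
  classical
  have hflip : ∀ x : V → Bool, ∑ c ∈ C, rad (Function.update x b (!x b) c) * a c =
      (∑ c ∈ C, rad (x c) * a c) - 2 * (rad (x b) * a b) := by
    intro x
    rw [← Finset.add_sum_erase _ _ hb, ← Finset.add_sum_erase _ (fun c => rad (x c) * a c) hb]
    have : ∑ c ∈ C.erase b, rad (Function.update x b (!x b) c) * a c =
        ∑ c ∈ C.erase b, rad (x c) * a c := by
      refine Finset.sum_congr rfl fun c hc => ?_
      rw [Function.update_of_ne (Finset.ne_of_mem_erase hc)]
    rw [this, Function.update_self, rad_not]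
    ring
  have h1 : #{x : V → Bool | ¬ lam ≤ |∑ c ∈ C, rad (x c) * a c|} ≤
      #{x : V → Bool | ¬ ¬ lam ≤ |∑ c ∈ C, rad (x c) * a c|} := by
    refine Finset.card_le_card_of_injOn (fun x => Function.update x b (!x b)) ?_ ?_
    · intro x hx
      simp only [Finset.coe_filter, Finset.mem_univ, true_and, Set.mem_ofPred_eq,
        not_le] at hx ⊢
      rw [hflip]
      have h2 : |rad (x b) * a b| = |a b| := by
        rcases rad_cases (x b) with h | h <;> simp [h]
      have h3 := abs_sub_abs_le_abs_sub (2 * (rad (x b) * a b)) (∑ c ∈ C, rad (x c) * a c)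
      rw [abs_mul, h2, abs_sub_comm] at h3
      norm_num at h3
      linarith
    · intro x _ y _ hxy
      have hxy' : ∀ c, Function.update x b (!x b) c = Function.update y b (!y b) c :=
        fun c => congrFun hxy c
      funext c
      have := hxy' c
      by_cases hc : c = b
      · subst hc; simpa using this
      · simpa [Function.update_of_ne hc] using this
  have h2 := Finset.card_filter_add_card_filter_not (s := (univ : Finset (V → Bool)))
    (fun x => ¬ lam ≤ |∑ c ∈ C, rad (x c) * a c|)
  rw [Finset.card_univ, Fintype.card_fun, Fintype.card_bool] at h2
  have h1' : (#{x : V → Bool | ¬ lam ≤ |∑ c ∈ C, rad (x c) * a c|} : ℝ) ≤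
      #{x : V → Bool | ¬ ¬ lam ≤ |∑ c ∈ C, rad (x c) * a c|} := by exact_mod_cast h1
  have h2' : (#{x : V → Bool | ¬ lam ≤ |∑ c ∈ C, rad (x c) * a c|} : ℝ) +
      #{x : V → Bool | ¬ ¬ lam ≤ |∑ c ∈ C, rad (x c) * a c|} = 2 ^ Fintype.card V := by
    exact_mod_cast h2
  linarith

open Classical in
/-- A lower-tail Chernoff bound at `1 / 4` of the number of coordinates, from the exponential
moment and `cosh (1 / 2) ≤ exp (1 / 8)`. -/
lemma chernoff (D : Finset V) :
    (#{y : V → Bool | (#{b ∈ D | y b = true} : ℝ) < (#D : ℝ) / 4} : ℝ) ≤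
      Real.exp (-(#D : ℝ) / 8) * 2 ^ Fintype.card V := by
  let g : V → Bool → ℝ := fun b t => if b ∈ D then (if t then Real.exp (-1) else 1) else 1
  have hg : ∀ y : V → Bool, ∏ b, g b (y b) = Real.exp (-(#{b ∈ D | y b = true} : ℝ)) := by
    intro y
    simp only [g]
    rw [Finset.prod_ite_mem, Finset.univ_inter, ← Finset.prod_filter, Finset.prod_const,
      ← Real.exp_nat_mul]
    ring_nf
  have h1 : ∑ y : V → Bool, ∏ b, g b (y b) = ∏ b, ∑ t, g b t := by
    rw [Finset.prod_univ_sum, Fintype.piFinset_univ]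
  have h2 : ∏ b, ∑ t, g b t = (1 + Real.exp (-1)) ^ #D * 2 ^ (Fintype.card V - #D) := by
    have : ∀ b, ∑ t, g b t = if b ∈ D then 1 + Real.exp (-1) else 2 := by
      intro b
      by_cases hb : b ∈ D
      · simp [g, hb, add_comm]
      · simp [g, hb]
    simp only [this]
    rw [Finset.prod_ite, Finset.prod_const, Finset.prod_const]
    congr 2
    · simp
    · rw [← Finset.card_compl]
      congr 1
      ext; simp
  have h3 : (#{y : V → Bool | (#{b ∈ D | y b = true} : ℝ) < (#D : ℝ) / 4} : ℝ) *
      Real.exp (-(#D : ℝ) / 4) ≤ ∑ y : V → Bool, ∏ b, g b (y b) := by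
    rw [← nsmul_eq_mul, ← Finset.sum_const]
    refine (Finset.sum_le_sum fun y hy => ?_).trans
      (Finset.sum_le_sum_of_subset_of_nonneg (Finset.filter_subset _ _) fun y _ _ => ?_)
    · rw [hg, Real.exp_le_exp]
      have := (Finset.mem_filter.1 hy).2
      linarith
    · rw [hg]; positivity
  have h4 : 1 + Real.exp (-1) ≤ 2 * Real.exp (-(3 / 8)) := by
    have h := Real.cosh_le_exp_half_sq (1 / 2)
    rw [Real.cosh_eq] at h
    have e1 : (1 : ℝ) = Real.exp (-(1 / 2)) * Real.exp (1 / 2) := by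
      rw [← Real.exp_add]; norm_num
    have e2 : Real.exp (-1) = Real.exp (-(1 / 2)) * Real.exp (-(1 / 2)) := by
      rw [← Real.exp_add]; norm_num
    have e3 : Real.exp (-(3 / 8)) = Real.exp (-(1 / 2)) * Real.exp ((1 / 2) ^ 2 / 2) := by
      rw [← Real.exp_add]; norm_num
    rw [e2, e3]
    nth_rewrite 1 [e1]
    have := Real.exp_pos (-(1 / 2))
    nlinarith
  have h5 : (1 + Real.exp (-1)) ^ #D * 2 ^ (Fintype.card V - #D) ≤
      Real.exp (-(3 / 8) * #D) * 2 ^ Fintype.card V := by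
    calc _ ≤ (2 * Real.exp (-(3 / 8))) ^ #D * 2 ^ (Fintype.card V - #D) := by
          gcongr
      _ = Real.exp (-(3 / 8)) ^ #D * (2 ^ #D * 2 ^ (Fintype.card V - #D)) := by ring
      _ = _ := by
        rw [← pow_add, Nat.add_sub_cancel' (Finset.card_le_univ D), ← Real.exp_nat_mul,
          mul_comm (#D : ℝ)]
  rw [h1, h2] at h3
  refine le_of_mul_le_mul_right (h3.trans (h5.trans (le_of_eq ?_)))
    (Real.exp_pos (-(#D : ℝ) / 4))
  rw [mul_right_comm, ← Real.exp_add]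
  congr 2
  ring

/-- The sum `∑ c ∈ C, x_c * p (C \ {c})`; for `p` the permanent on column sets, this is the
permanent on the column set `C` after adding the row of signs `x`. -/
noncomputable def extPerm (p : Finset V → ℝ) (x : V → Bool) (C : Finset V) : ℝ :=
  ∑ c ∈ C, rad (x c) * p (C.erase c)

open Classical in
/-- For a heavy set `B`, conditionally on the signs in `B` each one-element extension of `B`
is heavy for at least one value of the sign at the added element; so with high probability a
quarter of all extensions are heavy. -/
lemma good_ext (p : Finset V → ℝ) (B : Finset V) (lam : ℝ) (hB : lam ≤ |p B|) :
    (#{x : V → Bool | (#{b ∈ Bᶜ | lam ≤ |extPerm p x (insert b B)|} : ℝ) < (#Bᶜ : ℝ) / 4} : ℝ) ≤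
      Real.exp (-(#Bᶜ : ℝ) / 8) * 2 ^ Fintype.card V := by
  let c : (V → Bool) → V → ℝ := fun x b => ∑ v ∈ B, rad (x v) * p ((insert b B).erase v)
  let e : (V → Bool) → V → Bool := fun x b => decide (0 ≤ p B * c x b)
  -- `Φ x` records, at `b ∉ B`, whether the sign at `b` is the favourable one.
  let Φ : (V → Bool) → V → Bool := fun x b => if b ∈ B then x b else x b == e x b
  have hΦ : Function.Injective Φ := by
    intro x y hxy
    have h1 : ∀ b ∈ B, x b = y b := by
      intro b hb
      have := congrFun hxy b
      simpa [Φ, hb] using this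
    have h2 : e x = e y := by
      funext b
      have : c x b = c y b := Finset.sum_congr rfl fun v hv => by rw [h1 v hv]
      simp only [e, this]
    funext b
    by_cases hb : b ∈ B
    · exact h1 b hb
    · have := congrFun hxy b
      simp only [Φ, hb, if_false, h2] at this
      revert this
      cases x b <;> cases y b <;> cases e y b <;> simp
  refine le_trans ?_ (chernoff Bᶜ)
  norm_cast
  refine Finset.card_le_card_of_injOn Φ ?_ hΦ.injOn
  intro x hx
  simp only [Finset.coe_filter, Finset.mem_univ, true_and, Set.mem_ofPred_eq] at hx ⊢
  refine lt_of_le_of_lt ?_ hx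
  norm_cast
  refine Finset.card_le_card fun b hb => ?_
  rw [Finset.mem_filter] at hb ⊢
  refine ⟨hb.1, hB.trans ?_⟩
  have hbB : b ∉ B := Finset.mem_compl.1 hb.1
  have hxe : x b = e x b := by simpa [Φ, hbB] using hb.2
  have hq : extPerm p x (insert b B) = rad (x b) * p B + c x b := by
    unfold extPerm
    rw [Finset.sum_insert hbB, Finset.erase_insert hbB]
  rw [hq, ← sq_le_sq, hxe]
  by_cases h0 : 0 ≤ p B * c x b
  · simp only [e, h0, decide_true, rad, if_true]
    nlinarith [sq_nonneg (c x b)]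
  · simp only [e, h0, decide_false, rad]
    norm_num
    nlinarith [sq_nonneg (c x b)]

open Classical in
/-- The Erdős–Littlewood–Offord inequality, via Sperner's theorem applied in each fibre of the
restriction to the coordinates outside `U`. -/
lemma littlewood_offord (a : V → ℝ) (C U : Finset V) (hU : U ⊆ C) (lam : ℝ) (hlam : 0 < lam)
    (ha : ∀ b ∈ U, lam ≤ |a b|) (m : ℝ) :
    #{x : V → Bool | m ≤ ∑ c ∈ C, rad (x c) * a c ∧ ∑ c ∈ C, rad (x c) * a c < m + 2 * lam} ≤
      (#U).choose (#U / 2) * 2 ^ (Fintype.card V - #U) := by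
  let r : (V → Bool) → ({b // b ∉ U} → Bool) := fun x b => x b
  have hcard : #(univ : Finset ({b // b ∉ U} → Bool)) = 2 ^ (Fintype.card V - #U) := by
    simp [Finset.card_univ, Fintype.card_subtype_compl]
  rw [← hcard]
  refine Finset.card_le_mul_card_image_of_maps_to (f := r) (fun _ _ => Finset.mem_univ _) _ ?_
  intro z _
  rw [Finset.filter_filter]
  let φ : (V → Bool) → Finset {b // b ∈ U} := fun x => {b | x b = decide (0 ≤ a b)}
  set 𝒳 : Finset (V → Bool) := {x | (m ≤ ∑ c ∈ C, rad (x c) * a c ∧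
    ∑ c ∈ C, rad (x c) * a c < m + 2 * lam) ∧ r x = z} with h𝒳
  have key : ∀ x ∈ 𝒳, ∀ y ∈ 𝒳, φ x ⊆ φ y → x = y := by
    intro x hx y hy hsub
    simp only [h𝒳, Finset.mem_filter, Finset.mem_univ, true_and] at hx hy
    by_contra hne
    obtain ⟨v, hv⟩ := Function.ne_iff.1 hne
    have hout : ∀ b, b ∉ U → x b = y b := by
      intro b hb
      have := congrFun (hx.2.trans hy.2.symm) ⟨b, hb⟩
      exact this
    have hvU : v ∈ U := by
      by_contra h
      exact hv (hout v h)
    have hin : ∀ b ∈ U, x b ≠ y b → 2 * lam ≤ rad (y b) * a b - rad (x b) * a b := by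
      intro b hb hne
      have h1 := ha b hb
      have h2 : x b = decide (0 ≤ a b) → y b = decide (0 ≤ a b) := by
        intro h
        have : (⟨b, hb⟩ : {b // b ∈ U}) ∈ φ y := hsub (by simp [φ, h])
        simpa [φ] using this
      by_cases h0 : 0 ≤ a b
      · rw [abs_of_nonneg h0] at h1
        simp only [h0, decide_true] at h2
        revert hne h2
        cases x b <;> cases y b <;> simp [rad]
        linarith
      · rw [abs_of_neg (not_le.1 h0)] at h1
        simp only [h0, decide_false] at h2
        revert hne h2
        cases x b <;> cases y b <;> simp [rad]
        linarith
    have hnn : ∀ b ∈ C, 0 ≤ rad (y b) * a b - rad (x b) * a b := by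
      intro b _
      by_cases h : x b = y b
      · rw [h, sub_self]
      · by_cases hb : b ∈ U
        · linarith [hin b hb h]
        · exact absurd (hout b hb) h
    have h3 := Finset.single_le_sum hnn (hU hvU)
    rw [Finset.sum_sub_distrib] at h3
    linarith [hin v hvU hv, hx.1.1, hy.1.2]
  have hinj : Set.InjOn φ 𝒳 := fun x hx y hy hxy =>
    key x hx y hy (by rw [hxy])
  rw [← Finset.card_image_of_injOn hinj]
  have hanti : IsAntichain (· ⊆ ·) (SetLike.coe (𝒳.image φ)) := by
    intro s hs t ht hst hsub
    obtain ⟨x, hx, rfl⟩ := Finset.mem_image.1 (Finset.mem_coe.1 hs)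
    obtain ⟨y, hy, rfl⟩ := Finset.mem_image.1 (Finset.mem_coe.1 ht)
    exact hst (by rw [key x hx y hy hsub])
  have := hanti.sperner
  simpa using this

open Classical in
/-- A small-ball estimate: an interval of length `2 * t * lam` is covered by `⌈t⌉ ≤ 2 * t`
intervals to which the Littlewood–Offord inequality applies. -/
lemma small_ball_s14 (a : V → ℝ) (C U : Finset V) (hU : U ⊆ C) (lam : ℝ) (hlam : 0 < lam)
    (ha : ∀ b ∈ U, lam ≤ |a b|) (t K : ℝ) (ht : 1 ≤ t) (hK : 0 < K) (hKU : K ≤ #U) :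
    (#{x : V → Bool | ¬ t * lam ≤ |∑ c ∈ C, rad (x c) * a c|} : ℝ) ≤
      2 * t / √K * 2 ^ Fintype.card V := by
  set m := #U with hm
  have hmV : m ≤ Fintype.card V := Finset.card_le_univ U
  have h1 : #{x : V → Bool | ¬ t * lam ≤ |∑ c ∈ C, rad (x c) * a c|} ≤
      (m.choose (m / 2) * 2 ^ (Fintype.card V - m)) * ⌈t⌉₊ := by
    rw [← Finset.card_range ⌈t⌉₊]
    refine Finset.card_le_mul_card_image_of_maps_to
      (f := fun x => ⌊(∑ c ∈ C, rad (x c) * a c + t * lam) / (2 * lam)⌋₊) ?_ _ ?_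
    · intro x hx
      rw [Finset.mem_filter, not_le, abs_lt] at hx
      rw [Finset.mem_range, Nat.floor_lt (div_nonneg (by linarith) (by linarith)),
        div_lt_iff₀ (by linarith)]
      have := Nat.le_ceil t
      nlinarith
    · intro j _
      refine le_trans (Finset.card_le_card ?_)
        (littlewood_offord a C U hU lam hlam ha (2 * lam * j - t * lam))
      intro x hx
      simp only [Finset.mem_filter, Finset.mem_univ, true_and, not_le, abs_lt] at hx ⊢
      obtain ⟨hx1, hx2⟩ := hx
      rw [Nat.floor_eq_iff (div_nonneg (by linarith) (by linarith)), le_div_iff₀ (by linarith),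
        div_lt_iff₀ (by linarith)] at hx2
      constructor <;> linarith
  have h2 : ((m.choose (m / 2) : ℕ) : ℝ) * √K ≤ 2 ^ m := by
    have h := choose_half_sq_le m
    have h' : ((m.choose (m / 2) : ℕ) : ℝ) ^ 2 * m ≤ (2 ^ m) ^ 2 := by
      rw [← pow_mul, mul_comm m 2, pow_mul]; norm_num; exact_mod_cast h
    refine (sq_le_sq₀ (by positivity) (by positivity)).1 ?_
    rw [mul_pow, Real.sq_sqrt hK.le]
    refine le_trans ?_ h'
    gcongr
  have h3 : (⌈t⌉₊ : ℝ) ≤ 2 * t := by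
    linarith [Nat.ceil_lt_add_one (show (0 : ℝ) ≤ t by linarith)]
  have h1' : (#{x : V → Bool | ¬ t * lam ≤ |∑ c ∈ C, rad (x c) * a c|} : ℝ) ≤
      (m.choose (m / 2) * 2 ^ (Fintype.card V - m)) * ⌈t⌉₊ := by exact_mod_cast h1
  have hs : 0 < √K := Real.sqrt_pos.2 hK
  refine h1'.trans ?_
  calc ((m.choose (m / 2) : ℕ) : ℝ) * 2 ^ (Fintype.card V - m) * ⌈t⌉₊
      ≤ (2 ^ m / √K) * 2 ^ (Fintype.card V - m) * (2 * t) := by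
        gcongr
        rwa [le_div_iff₀ hs]
    _ = 2 * t / √K * (2 ^ m * 2 ^ (Fintype.card V - m)) := by ring
    _ = _ := by rw [← pow_add, Nat.add_sub_cancel' hmV]

/-! ### Counting heavy sets -/

/-- Double counting of the pairs `B ⊂ C` with `#B = k`, `#C = k + 1`. -/
lemma double_count (k : ℕ) (g : Finset V → Finset V → ℝ) :
    ∑ C ∈ powersetCard (k + 1) (univ : Finset V), ∑ b ∈ C, g (C.erase b) C =
      ∑ B ∈ powersetCard k (univ : Finset V), ∑ b ∈ Bᶜ, g B (insert b B) := by
  rw [Finset.sum_sigma', Finset.sum_sigma']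
  refine Finset.sum_bij' (fun z _ => ⟨z.1.erase z.2, z.2⟩) (fun z _ => ⟨insert z.2 z.1, z.2⟩)
    ?_ ?_ ?_ ?_ ?_
  · rintro ⟨C, b⟩ h
    simp only [Finset.mem_sigma, Finset.mem_powersetCard_univ] at h ⊢
    exact ⟨by rw [Finset.card_erase_of_mem h.2, h.1]; rfl, by simp⟩
  · rintro ⟨B, b⟩ h
    simp only [Finset.mem_sigma, Finset.mem_powersetCard_univ, Finset.mem_compl] at h ⊢
    exact ⟨by rw [Finset.card_insert_of_notMem h.2, h.1], by simp⟩
  · rintro ⟨C, b⟩ h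
    simp only [Finset.mem_sigma] at h
    simp [Finset.insert_erase h.2]
  · rintro ⟨B, b⟩ h
    simp only [Finset.mem_sigma, Finset.mem_compl] at h
    simp [Finset.erase_insert h.2]
  · rintro ⟨C, b⟩ h
    simp only [Finset.mem_sigma] at h
    simp [Finset.insert_erase h.2]

open Classical in
/-- The elements whose removal from `C` leaves a `lam`-heavy set. -/
noncomputable def heavyIn (p : Finset V → ℝ) (lam : ℝ) (C : Finset V) : Finset V :=
  {b ∈ C | lam ≤ |p (C.erase b)|}

open Classical in
lemma sum_heavyIn (p : Finset V → ℝ) (lam : ℝ) (k R : ℕ) (hV : Fintype.card V = k + R) :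
    ∑ C ∈ powersetCard (k + 1) (univ : Finset V), (#(heavyIn p lam C) : ℝ) =
      R * #{B ∈ powersetCard k (univ : Finset V) | lam ≤ |p B|} := by
  have h := double_count (V := V) k (fun B _ => if lam ≤ |p B| then (1 : ℝ) else 0)
  have h1 : ∀ C : Finset V, (#(heavyIn p lam C) : ℝ) =
      ∑ b ∈ C, if lam ≤ |p (C.erase b)| then (1 : ℝ) else 0 := by
    intro C
    rw [heavyIn, Finset.sum_boole]
  simp only [h1]
  rw [h, Finset.card_filter]
  push_cast
  rw [Finset.mul_sum]
  refine Finset.sum_congr rfl fun B hB => ?_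
  rw [Finset.sum_const, nsmul_eq_mul, Finset.card_compl, hV, (Finset.mem_powersetCard.1 hB).2]
  simp

open Classical in
lemma count_ge_const (p : Finset V → ℝ) (k R n : ℕ) (hV : Fintype.card V = k + R) (hR : 0 < R)
    (hn : k + 1 ≤ n) (lam N : ℝ) (hN : 0 < N)
    (hH : N ≤ #{B ∈ powersetCard k (univ : Finset V) | lam ≤ |p B|}) :
    (#{x : V → Bool | ¬ (R : ℝ) * N / (8 * n) ≤
      #{C ∈ powersetCard (k + 1) (univ : Finset V) | lam ≤ |extPerm p x C|}} : ℝ) ≤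
      2 * Real.exp (-(R : ℝ) / 8) * 2 ^ Fintype.card V := by
  set H : Finset (Finset V) := {B ∈ powersetCard k (univ : Finset V) | lam ≤ |p B|} with hHdef
  have hBc : ∀ B ∈ H, (#Bᶜ : ℝ) = R := by
    intro B hB
    rw [hHdef, Finset.mem_filter, Finset.mem_powersetCard] at hB
    rw [Finset.card_compl, hV, hB.1.2]
    simp
  have hn0 : (0 : ℝ) < n := by exact_mod_cast (by omega : 0 < n)
  let F : (V → Bool) → Finset V → Prop := fun x B =>
    (#{b ∈ Bᶜ | lam ≤ |extPerm p x (insert b B)|} : ℝ) < (R : ℝ) / 4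
  have hmk := markov_weight (X := V → Bool) H (fun _ => 1) (fun _ _ => zero_le_one) #H (by simp)
    (by linarith) F (Real.exp (-(R : ℝ) / 8)) (1 / 2) (by
      intro B hB _
      have h := good_ext p B lam (Finset.mem_filter.1 hB).2
      rw [hBc B hB] at h
      simpa [Fintype.card_fun] using h)
  have hsub : (#{x : V → Bool | ¬ (R : ℝ) * N / (8 * n) ≤
      #{C ∈ powersetCard (k + 1) (univ : Finset V) | lam ≤ |extPerm p x C|}} : ℝ) ≤
      #{x | (1 / 2 : ℝ) * #H ≤ ∑ B ∈ H with F x B, (1 : ℝ)} := by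
    refine Nat.cast_le.2 (Finset.card_le_card (Finset.monotone_filter_right _ fun x _ hx => ?_))
    contrapose! hx
    have h1 : ∑ B ∈ H with F x B, (1 : ℝ) + ∑ B ∈ H with ¬ F x B, (1 : ℝ) = #H := by
      rw [Finset.sum_filter_add_sum_filter_not]; simp
    have h2 : (R : ℝ) / 4 * ∑ B ∈ H with ¬ F x B, (1 : ℝ) ≤
        ∑ B ∈ H, (#{b ∈ Bᶜ | lam ≤ |extPerm p x (insert b B)|} : ℝ) := by
      rw [Finset.mul_sum]
      refine (Finset.sum_le_sum fun B hB => ?_).trans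
        (Finset.sum_le_sum_of_subset_of_nonneg (Finset.filter_subset _ _) fun _ _ _ => by
          positivity)
      have := (Finset.mem_filter.1 hB).2
      simp only [F, not_lt] at this
      linarith
    have h3 := double_count (V := V) k
      (fun B C => if lam ≤ |p B| then (if lam ≤ |extPerm p x C| then (1 : ℝ) else 0) else 0)
    have h4 : ∑ B ∈ H, (#{b ∈ Bᶜ | lam ≤ |extPerm p x (insert b B)|} : ℝ) =
        ∑ B ∈ powersetCard k (univ : Finset V), ∑ b ∈ Bᶜ, (if lam ≤ |p B| then
          (if lam ≤ |extPerm p x (insert b B)| then (1 : ℝ) else 0) else 0) := by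
      rw [hHdef, Finset.sum_filter]
      refine Finset.sum_congr rfl fun B _ => ?_
      split_ifs with hB
      · rw [Finset.sum_boole]
      · simp
    have h5 : ∑ C ∈ powersetCard (k + 1) (univ : Finset V), ∑ b ∈ C, (if lam ≤ |p (C.erase b)| then
          (if lam ≤ |extPerm p x C| then (1 : ℝ) else 0) else 0) ≤
        n * #{C ∈ powersetCard (k + 1) (univ : Finset V) | lam ≤ |extPerm p x C|} := by
      rw [Finset.card_filter]
      push_cast
      rw [Finset.mul_sum]
      refine Finset.sum_le_sum fun C hC => ?_
      have hCn : (#C : ℝ) ≤ n := by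
        rw [(Finset.mem_powersetCard.1 hC).2]; exact_mod_cast hn
      split_ifs with hC'
      · refine (Finset.sum_le_sum (g := fun _ => (1 : ℝ)) fun b _ => ?_).trans ?_
        · split_ifs <;> norm_num
        · simpa using hCn
      · simp
    rw [← h4] at h3
    rw [h3] at h5
    have hR' : (0 : ℝ) < R := by exact_mod_cast hR
    rw [div_le_iff₀ (by positivity)]
    have h6 : (R : ℝ) / 4 * (1 / 2 * N) ≤ R / 4 * ∑ B ∈ H with ¬ F x B, (1 : ℝ) := by
      gcongr
      linarith
    linarith
  simp only [Fintype.card_fun, Fintype.card_bool] at hmk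
  push_cast at hmk
  linarith

open Classical in
/-- The common argument for both halves of the dichotomy: sets `C` weighted by `w C ≤ L` with
total weight at least `T / 2`, each failing to be heavy with probability at most `ρ`. -/
lemma count_ge_weight (𝒞 : Finset (Finset V)) (w : Finset V → ℝ) (L : ℝ) (hL : 0 < L)
    (hw : ∀ C ∈ 𝒞, 0 ≤ w C) (hwL : ∀ C ∈ 𝒞, w C ≤ L) (T : ℝ) (hT : 0 < T)
    (hS : T / 2 ≤ ∑ C ∈ 𝒞, w C) (G : (V → Bool) → Finset V → Prop) (ρ : ℝ)
    (hF : ∀ C ∈ 𝒞, w C ≠ 0 →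
      (#{x : V → Bool | ¬ G x C} : ℝ) ≤ ρ * 2 ^ Fintype.card V) :
    (#{x : V → Bool | ¬ T / (8 * L) ≤ #{C ∈ 𝒞 | G x C}} : ℝ) ≤
      ρ / (3 / 4) * 2 ^ Fintype.card V := by
  obtain ⟨S, hSdef⟩ : ∃ S, S = ∑ C ∈ 𝒞, w C := ⟨_, rfl⟩
  rw [← hSdef] at hS
  have hmk := markov_weight (X := V → Bool) 𝒞 w hw S hSdef (by linarith) (fun x C => ¬ G x C) ρ
    (3 / 4) (by
      intro C hC h0
      simpa [Fintype.card_fun] using hF C hC h0)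
  have hsub : (#{x : V → Bool | ¬ T / (8 * L) ≤ #{C ∈ 𝒞 | G x C}} : ℝ) ≤
      #{x : V → Bool | 3 / 4 * S ≤ ∑ C ∈ 𝒞 with ¬ G x C, w C} := by
    refine Nat.cast_le.2 (Finset.card_le_card (Finset.monotone_filter_right _ fun x _ hx => ?_))
    contrapose! hx
    have h1 : ∑ C ∈ 𝒞 with G x C, w C + ∑ C ∈ 𝒞 with ¬ G x C, w C = S := by
      rw [Finset.sum_filter_add_sum_filter_not, hSdef]
    have h2 : ∑ C ∈ 𝒞 with G x C, w C ≤ #{C ∈ 𝒞 | G x C} * L := by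
      rw [← nsmul_eq_mul, ← Finset.sum_const]
      exact Finset.sum_le_sum fun C hC => hwL C (Finset.mem_filter.1 hC).1
    rw [div_le_iff₀ (by positivity)]
    linarith
  simp only [Fintype.card_fun, Fintype.card_bool] at hmk
  push_cast at hmk
  rw [div_mul_eq_mul_div, le_div_iff₀ (by norm_num)]
  linarith

end Cube

/-! ### The growth lemma -/

open Classical in
lemma ev_iff (R k : ℕ) (N lam : ℝ) {s : ℕ} (M : Matrix (Fin s) (Fin s) ℝ) :
    Ev R k N lam M ↔ N ≤ #{B ∈ powersetCard k (univ : Finset (Fin s)) |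
      lam ≤ |permOn M (univ.filter fun i : Fin s => R ≤ (i : ℕ)) B|} := by
  unfold Ev
  have : ({B : Finset (Fin s) | B.card = k ∧
        lam ≤ |permOn M (univ.filter fun i : Fin s => R ≤ (i : ℕ)) B|} : Finset _) =
      {B ∈ powersetCard k (univ : Finset (Fin s)) |
        lam ≤ |permOn M (univ.filter fun i : Fin s => R ≤ (i : ℕ)) B|} := by
    ext B
    simp
  rw [← this]

open Classical in
/-- The heavy sets of the extended matrix include those avoiding the last column, whose
permanents are given by `extPerm`. -/
lemma ev_ext (R k : ℕ) (N lam : ℝ) (M : Matrix (Fin (k + R)) (Fin (k + R)) ℝ)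
    (ω : Fin (k + R + 1) → Fin (k + R + 1) → Bool)
    (h : N ≤ #{C ∈ powersetCard (k + 1) (univ : Finset (Fin (k + R))) |
      lam ≤ |extPerm (permOn M (univ.filter fun i : Fin (k + R) => R ≤ (i : ℕ)))
        (fun i => ω i.castSucc (Fin.last (k + R))) C|}) :
    Ev R (k + 1) N lam (extSym (k + R + 1) M ω) := by
  rw [ev_iff]
  refine h.trans (Nat.cast_le.2 ?_)
  refine Finset.card_le_card_of_injOn (fun C => C.map Fin.castSuccEmb) ?_
    (Finset.map_injective _).injOn
  intro C hC
  simp only [Finset.coe_filter, Finset.mem_powersetCard_univ, Set.mem_ofPred_eq] at hC ⊢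
  refine ⟨by simpa using hC.1, ?_⟩
  rw [permOn_expand M _ ?_ (univ.filter fun i : Fin (k + R) => R ≤ (i : ℕ)) _ ?_ C]
  · refine hC.2.trans (le_of_eq (congrArg _ (Finset.sum_congr rfl fun c _ => ?_)))
    congr 1
    have h1 : ¬ (Fin.last (k + R) ≤ c.castSucc) := not_le.2 (Fin.castSucc_lt_last c)
    simp [extSym, h1]
  · intro i j
    simp [extSym]
  · ext i
    refine Fin.lastCases ?_ (fun j => ?_) i
    · simp
    · simp [(Fin.castSucc_lt_last j).ne]

open Classical in
lemma probExt_ev (R k : ℕ) (N lam : ℝ) (M : Matrix (Fin (k + R)) (Fin (k + R)) ℝ) (ρ : ℝ)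
    (h : (#{x : Fin (k + R) → Bool | ¬ N ≤ #{C ∈ powersetCard (k + 1)
        (univ : Finset (Fin (k + R))) | lam ≤ |extPerm (permOn M
          (univ.filter fun i : Fin (k + R) => R ≤ (i : ℕ))) x C|}} : ℝ) ≤ ρ * 2 ^ (k + R)) :
    1 - ρ ≤ probExt (k + R + 1) M fun M' => Ev R (k + 1) N lam M' := by
  refine probExt_ge M _ (fun x => N ≤ #{C ∈ powersetCard (k + 1)
    (univ : Finset (Fin (k + R))) | lam ≤ |extPerm (permOn M
      (univ.filter fun i : Fin (k + R) => R ≤ (i : ℕ))) x C|}) ρ ?_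
    (fun ω hω => ev_ext R k _ _ M ω hω)
  convert h

/-- The growth lemma for heavy submatrices: the event `E(k,N,λ)` can be partitioned into
two events `E'` and `E''` (each determined by `M_{k+R}`) such that conditionally on any
symmetric `±1` outcome `M` of `M_{k+R}`: (1) if `E(k,N,λ)` holds then `E(k+1, N⁻, λ)`
holds for the random extension with probability at least `1 - 2e^(-R/8)`; (2) if `E'`
holds then `E(k+1, N⁺, λ)` holds with probability at least `1/3`; (3) if `E''` holds then
`E(k+1, N⁻, λ⁺)` holds with probability at least `1 - 4K^(-δ)`; where `N⁺ = RN/(8K)`,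
`N⁻ = RN/(8n)` and `λ⁺ = K^(1/2-δ) λ`. -/
theorem grow_large_minors (R n k : ℕ) (hkR : k + R ≤ n)
    (δ K lam N : ℝ) (hδ0 : 0 < δ) (hδ : δ < 1 / 2) (hK : 1 < K) (hlam : 0 < lam)
    (hN : 0 < N) :
    ∃ E' E'' : Matrix (Fin (k + R)) (Fin (k + R)) ℝ → Prop,
      (∀ M, Ev R k N lam M ↔ E' M ∨ E'' M) ∧
      (∀ M, ¬(E' M ∧ E'' M)) ∧
      (∀ M : Matrix (Fin (k + R)) (Fin (k + R)) ℝ, M.IsSymm →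
        (∀ i j, M i j = 1 ∨ M i j = -1) → Ev R k N lam M →
        1 - 2 * Real.exp (-(R : ℝ) / 8) ≤
          probExt (k + R + 1) M fun M' =>
            Ev R (k + 1) ((R : ℝ) * N / (8 * n)) lam M') ∧
      (∀ M : Matrix (Fin (k + R)) (Fin (k + R)) ℝ, M.IsSymm →
        (∀ i j, M i j = 1 ∨ M i j = -1) → E' M →
        1 / 3 ≤
          probExt (k + R + 1) M fun M' =>
            Ev R (k + 1) ((R : ℝ) * N / (8 * K)) lam M') ∧
      (∀ M : Matrix (Fin (k + R)) (Fin (k + R)) ℝ, M.IsSymm →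
        (∀ i j, M i j = 1 ∨ M i j = -1) → E'' M →
        1 - 4 * K ^ (-δ) ≤
          probExt (k + R + 1) M fun M' =>
            Ev R (k + 1) ((R : ℝ) * N / (8 * n)) (K ^ ((1 : ℝ) / 2 - δ) * lam) M') := by
  classical
  let p : Matrix (Fin (k + R)) (Fin (k + R)) ℝ → Finset (Fin (k + R)) → ℝ := fun M =>
    permOn M (univ.filter fun i : Fin (k + R) => R ≤ (i : ℕ))
  let 𝒞 : Finset (Finset (Fin (k + R))) := powersetCard (k + 1) univ
  -- Weight carried by the sets containing few, respectively many, heavy subsets.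
  let wlo : Matrix (Fin (k + R)) (Fin (k + R)) ℝ → Finset (Fin (k + R)) → ℝ := fun M C =>
    if (#(heavyIn (p M) lam C) : ℝ) ≤ K then (#(heavyIn (p M) lam C) : ℝ) else 0
  let whi : Matrix (Fin (k + R)) (Fin (k + R)) ℝ → Finset (Fin (k + R)) → ℝ := fun M C =>
    if (#(heavyIn (p M) lam C) : ℝ) ≤ K then 0 else (#(heavyIn (p M) lam C) : ℝ)
  have hV : Fintype.card (Fin (k + R)) = k + R := Fintype.card_fin _
  have hKδ : 0 < K ^ (-δ) := Real.rpow_pos_of_pos (by linarith) _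
  -- For `R = 0` all required counts are `0`.
  have hzero : R = 0 → ∀ (M : Matrix (Fin (k + R)) (Fin (k + R)) ℝ) (mu T ρ : ℝ), 0 ≤ ρ →
      1 - ρ ≤ probExt (k + R + 1) M fun M' => Ev R (k + 1) ((R : ℝ) * N / T) mu M' := by
    intro hR M mu T ρ hρ
    refine probExt_ge M _ (fun _ => True) ρ ?_ ?_
    · simp only [not_true_eq_false, Finset.filter_false, Finset.card_empty, Nat.cast_zero]
      positivity
    · intro ω _
      rw [ev_iff]
      have : (R : ℝ) * N / T = 0 := by simp [hR]
      rw [this]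
      positivity
  refine ⟨fun M => Ev R k N lam M ∧ R * N / 2 ≤ ∑ C ∈ 𝒞, wlo M C,
    fun M => Ev R k N lam M ∧ ¬ R * N / 2 ≤ ∑ C ∈ 𝒞, wlo M C, ?_, ?_, ?_, ?_, ?_⟩
  · intro M; tauto
  · intro M; tauto
  · intro M _ _ hE
    rcases Nat.eq_zero_or_pos R with hR | hR
    · exact hzero hR M _ _ _ (by positivity)
    · refine probExt_ev R k _ _ M _ ?_
      have := count_ge_const (p M) k R n hV hR (by omega) lam N hN ((ev_iff _ _ _ _ M).1 hE)
      rwa [hV] at this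
  · rintro M _ _ ⟨_, hS⟩
    rw [show (1 : ℝ) / 3 = 1 - 2 / 3 by norm_num]
    rcases Nat.eq_zero_or_pos R with hR | hR
    · exact hzero hR M _ _ _ (by norm_num)
    · have hR' : (0 : ℝ) < R := by exact_mod_cast hR
      refine probExt_ev R k _ _ M _ ?_
      have := count_ge_weight 𝒞 (wlo M) K (by linarith)
        (fun C _ => by simp only [wlo]; split_ifs <;> positivity)
        (fun C _ => by simp only [wlo]; split_ifs <;> linarith) (R * N) (by positivity) hS
        (fun x C => lam ≤ |extPerm (p M) x C|) (1 / 2) (by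
          intro C _ h0
          have hne : (heavyIn (p M) lam C).Nonempty := by
            rw [Finset.nonempty_iff_ne_empty]
            intro h
            simp [wlo, h] at h0
          obtain ⟨b, hb⟩ := hne
          rw [heavyIn, Finset.mem_filter] at hb
          exact half_heavy (fun c => p M (C.erase c)) C lam b hb.1 hb.2)
      rw [hV] at this
      refine this.trans (le_of_eq ?_)
      norm_num
  · rintro M _ _ ⟨hE, hS⟩
    rcases Nat.eq_zero_or_pos R with hR | hR
    · exact hzero hR M _ _ _ (by positivity)
    · have hR' : (0 : ℝ) < R := by exact_mod_cast hR
      have hn0 : (0 : ℝ) < n := by exact_mod_cast (by omega : 0 < n)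
      have hH := (ev_iff _ _ _ _ M).1 hE
      have htot := sum_heavyIn (p M) lam k R hV
      have hsplit : ∑ C ∈ 𝒞, wlo M C + ∑ C ∈ 𝒞, whi M C =
          ∑ C ∈ 𝒞, (#(heavyIn (p M) lam C) : ℝ) := by
        rw [← Finset.sum_add_distrib]
        refine Finset.sum_congr rfl fun C _ => ?_
        simp only [wlo, whi]
        split_ifs <;> simp
      have hS' : R * N / 2 ≤ ∑ C ∈ 𝒞, whi M C := by
        have h1 : (R : ℝ) * N ≤ ∑ C ∈ 𝒞, (#(heavyIn (p M) lam C) : ℝ) := by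
          rw [htot]
          gcongr
        linarith
      have hle : ∀ C ∈ 𝒞, (#(heavyIn (p M) lam C) : ℝ) ≤ n := by
        intro C hC
        have h1 : #(heavyIn (p M) lam C) ≤ #C := Finset.card_filter_le _ _
        rw [(Finset.mem_powersetCard.1 hC).2] at h1
        exact_mod_cast h1.trans (by omega)
      refine probExt_ev R k _ _ M _ ?_
      have := count_ge_weight 𝒞 (whi M) n hn0
        (fun C _ => by simp only [whi]; split_ifs <;> positivity)
        (fun C hC => by
          simp only [whi]
          split_ifs
          · exact hn0.le
          · exact hle C hC) (R * N) (by positivity) hS'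
        (fun x C => K ^ ((1 : ℝ) / 2 - δ) * lam ≤ |extPerm (p M) x C|) (2 * K ^ (-δ)) (by
          intro C _ h0
          have hKC : K ≤ #(heavyIn (p M) lam C) := by
            by_contra h
            simp [whi, (not_le.1 h).le] at h0
          have h1 := small_ball_s14 (fun c => p M (C.erase c)) C (heavyIn (p M) lam C)
            (Finset.filter_subset _ _) lam hlam (fun b hb => (Finset.mem_filter.1 hb).2)
            (K ^ ((1 : ℝ) / 2 - δ)) K (Real.one_le_rpow hK.le (by linarith)) (by linarith) hKC
          have h2 : 2 * K ^ ((1 : ℝ) / 2 - δ) / √K = 2 * K ^ (-δ) := by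
            rw [Real.sqrt_eq_rpow, mul_div_assoc, ← Real.rpow_sub (by linarith)]
            congr 2
            ring
          rw [h2] at h1
          exact h1)
      rw [hV] at this
      refine this.trans ?_
      gcongr
      linarith
end
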